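/- arXiv:1902.07252 — 3 statements merged into one kernel-verified Lean document; each statement's English description precedes it below -/
import Mathlib

section
/- For every coordinate direction i ∈ {1, …, d}, every y ∈ T_L with y·e_i = 0, and all integers m, n with 0 < m ≤ n ≤ L/2, one has ⟨φ_o · φ_{y + n e_i}⟩_{L,N,β} + ⟨φ_o · φ_{n e_i}⟩_{L,N,β} ≤ ⟨φ_o · φ_{y + m e_i}⟩_{L,N,β} + ⟨φ_o · φ_{m e_i}⟩_{L,N,β}; that is, the function n ↦ ⟨φ_o · φ_{y + n e_i}⟩_{L,N,β} + ⟨φ_o · φ_{n e_i}⟩_{L,N,β} is non-increasing for integer n in (0, L/2]. -/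
open MeasureTheory Metric
open scoped RealInnerProductSpace BigOperators

/-- Vertices of the torus `(ℤ/Lℤ)^d`. -/
abbrev TorusPt (d L : ℕ) := Fin d → ZMod L

/-- Nearest-neighbour adjacency on the torus: `x` and `y` differ by `±1 (mod L)`
in exactly one coordinate. -/
def torusAdj {d L : ℕ} (x y : TorusPt d L) : Prop :=
  ∃ j : Fin d, y = Function.update x j (x j + 1) ∨ y = Function.update x j (x j - 1)

instance {d L : ℕ} (x y : TorusPt d L) : Decidable (torusAdj x y) := by
  unfold torusAdj; infer_instance

/-- The unit sphere `S^{N-1} ⊂ ℝ^N`. -/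
abbrev SpinSphere (N : ℕ) := sphere (0 : EuclideanSpace ℝ (Fin N)) 1

/-- A spin configuration on the torus. -/
abbrev SpinCfg (d L N : ℕ) := TorusPt d L → SpinSphere N

/-- The uniform probability measure on the unit sphere `S^{N-1}`. -/
noncomputable def sphereUniform (N : ℕ) : Measure (SpinSphere N) :=
  ((volume : Measure (EuclideanSpace ℝ (Fin N))).toSphere Set.univ)⁻¹ •
    (volume : Measure (EuclideanSpace ℝ (Fin N))).toSphere

/-- The product over vertices of the uniform probability measures on the sphere. -/
noncomputable def spinMeasure (d L N : ℕ) [NeZero L] : Measure (SpinCfg d L N) :=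
  Measure.pi fun _ : TorusPt d L => sphereUniform N

/-- The Hamiltonian `H(φ) = -∑_{{x,y} edge} φ_x · φ_y`; every unordered
nearest-neighbour edge appears exactly twice in the double sum below. -/
noncomputable def hamiltonian {d L N : ℕ} [NeZero L] (φ : SpinCfg d L N) : ℝ :=
  -(1 / 2) * ∑ x : TorusPt d L, ∑ y : TorusPt d L,
    if torusAdj x y then
      ⟪(φ x : EuclideanSpace ℝ (Fin N)), (φ y : EuclideanSpace ℝ (Fin N))⟫
    else 0

/-- The Gibbs expectation `⟨f⟩_{L,N,β}`. -/
noncomputable def gibbsExp (d L N : ℕ) [NeZero L] (β : ℝ) (f : SpinCfg d L N → ℝ) : ℝ :=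
  (∫ φ, Real.exp (-β * hamiltonian φ) ∂(spinMeasure d L N))⁻¹ *
    ∫ φ, f φ * Real.exp (-β * hamiltonian φ) ∂(spinMeasure d L N)

/-- The spin-spin correlation `⟨φ_x ⬝ φ_y⟩_{L,N,β}`. -/
noncomputable def corrDot (d L N : ℕ) [NeZero L] (β : ℝ) (x y : TorusPt d L) : ℝ :=
  gibbsExp d L N β fun φ =>
    ⟪(φ x : EuclideanSpace ℝ (Fin N)), (φ y : EuclideanSpace ℝ (Fin N))⟫

/-- The correlation `⟨φ_x^1 φ_y^1⟩_{L,N,β}` of first components. -/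
noncomputable def corrOne (d L N : ℕ) [NeZero L] [NeZero N] (β : ℝ) (x y : TorusPt d L) : ℝ :=
  gibbsExp d L N β fun φ =>
    (φ x : EuclideanSpace ℝ (Fin N)) 0 * (φ y : EuclideanSpace ℝ (Fin N)) 0

/-- The origin of the torus. -/
def torusOrigin (d L : ℕ) : TorusPt d L := fun _ => 0

/-- The point `n • e_i` on the `i`-th cartesian axis. -/
def axisPt (d L : ℕ) (i : Fin d) (n : ℕ) : TorusPt d L :=
  fun k => if k = i then (n : ZMod L) else 0

/-- The sup torus norm `‖z‖_∞ = max_i min(z_i, L - z_i)`. -/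
def tnormInf {d L : ℕ} (z : TorusPt d L) : ℕ :=
  Finset.univ.sup fun i : Fin d => min (z i).val (L - (z i).val)

/-!
For a reflection `θ` exchanging two halves of the torus, an observable is reflection positive if it
is a limit of sums of products `h · θh` with `h` living on one half. Such observables form a closed
cone which is stable under products, hence under `exp`, and their integral against a product measure
is nonnegative. A ferromagnetic nearest-neighbour Boltzmann weight is reflection positive, because
the edges inside the halves contribute a factor `exp A · θ(exp A)` and the edges crossing from one
half to the other contribute the exponential of a sum of terms `σ_x · σ_{θx}`.

Put charges `+1` on `y + a e_i` and `a e_i` and charges `-1` on `y + b e_i` and `b e_i`. For the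
reflection `z ↦ -e - z` of the `i`-th coordinate, positivity of the energy of these charges with
their mirror images says that `u(n) = ⟨φ_o · φ_{y + n e_i}⟩ + ⟨φ_o · φ_{n e_i}⟩` satisfies
`2 u(a + b + e) ≤ u(2a + e) + u(2b + e)`. With `b = a + 1`, the cases `e = 0` and `e = 1` make `u`
convex on `[0, L]` for either parity of `L`. As `u` is also symmetric, `u(L - n) = u(n)`, it is
nonincreasing on `[0, L/2]`.
-/

section Piecewise

variable {ι : Type*} {α : ι → Type*} (s : Set ι) [DecidablePred (· ∈ s)] (χ : ∀ i, α i)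

theorem continuous_piecewise_right [∀ i, TopologicalSpace (α i)] :
    Continuous fun φ : ∀ i, α i => s.piecewise χ φ := by
  refine continuous_pi fun i => ?_
  by_cases hi : i ∈ s <;> simp only [Set.piecewise, hi, if_true, if_false] <;> fun_prop

theorem dependsOn_comp_piecewise {β : Type*} {f : (∀ i, α i) → β} {t : Set ι}
    (hf : DependsOn f t) : DependsOn (fun φ => f (s.piecewise χ φ)) (t \ s) := by
  refine fun φ ψ hφψ => hf fun i hi => ?_
  by_cases his : i ∈ s
  · simp only [his, Set.piecewise_eq_of_mem]
  · simp only [his, not_false_eq_true, Set.piecewise_eq_of_notMem, hφψ i ⟨hi, his⟩]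

end Piecewise

section ProductMeasure

variable {ι : Type*} [Fintype ι]

theorem measurePreserving_piecewise {α : ι → Type*} [∀ i, MeasurableSpace (α i)]
    (μ : ∀ i, Measure (α i)) [∀ i, IsProbabilityMeasure (μ i)] (s : Set ι)
    [DecidablePred (· ∈ s)] :
    MeasurePreserving (fun q : (∀ i, α i) × (∀ i, α i) => s.piecewise q.1 q.2)
      ((Measure.pi μ).prod (Measure.pi μ)) (Measure.pi μ) := by
  have hmeas : Measurable fun q : (∀ i, α i) × (∀ i, α i) => s.piecewise q.1 q.2 := by
    refine measurable_pi_lambda _ fun i => ?_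
    by_cases hi : i ∈ s <;> simp only [Set.piecewise, hi, if_true, if_false] <;> fun_prop
  refine ⟨hmeas, (Measure.pi_eq fun t ht => ?_).symm⟩
  have hpre : (fun q : (∀ i, α i) × (∀ i, α i) => s.piecewise q.1 q.2) ⁻¹' Set.univ.pi t =
      (Set.univ.pi fun i => if i ∈ s then t i else Set.univ) ×ˢ
        (Set.univ.pi fun i => if i ∈ s then Set.univ else t i) := by
    ext q
    simp only [Set.mem_preimage, Set.mem_univ_pi, Set.mem_prod, ← forall_and]
    refine forall_congr' fun i => ?_
    by_cases hi : i ∈ s <;> simp [hi]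
  rw [Measure.map_apply hmeas (.univ_pi ht), hpre, Measure.prod_prod, Measure.pi_pi,
    Measure.pi_pi, ← Finset.prod_mul_distrib]
  refine Finset.prod_congr rfl fun i _ => ?_
  by_cases hi : i ∈ s <;> simp [hi]

theorem integral_pi_eq_integral_integral_piecewise {α : ι → Type*} [∀ i, MeasurableSpace (α i)]
    (μ : ∀ i, Measure (α i)) [∀ i, IsProbabilityMeasure (μ i)] (s : Set ι)
    [DecidablePred (· ∈ s)] {f : (∀ i, α i) → ℝ} (hf : Integrable f (Measure.pi μ)) :
    ∫ φ, f φ ∂Measure.pi μ =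
      ∫ χ, ∫ φ, f (s.piecewise χ φ) ∂Measure.pi μ ∂Measure.pi μ := by
  have hs := measurePreserving_piecewise μ s
  rw [← integral_prod (fun q : (∀ i, α i) × (∀ i, α i) => f (s.piecewise q.1 q.2))
    (hs.integrable_comp_of_integrable hf)]
  conv_lhs => rw [← hs.map_eq]
  exact integral_map hs.measurable.aemeasurable
    (by rw [hs.map_eq]; exact hf.aestronglyMeasurable)

theorem integral_pi_comp_perm {S : Type*} [MeasurableSpace S] (ν : Measure S) [SigmaFinite ν]
    (θ : Equiv.Perm ι) (f : (ι → S) → ℝ) :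
    ∫ φ, f (φ ∘ θ) ∂Measure.pi (fun _ : ι => ν) = ∫ φ, f φ ∂Measure.pi (fun _ : ι => ν) :=
  (measurePreserving_arrowCongr' (fun _ => ν) (fun _ => ν) θ.symm (MeasurableEquiv.refl S)
    fun _ => .id ν).integral_comp' f

theorem integral_mul_of_dependsOn_of_disjoint {α : ι → Type*} [∀ i, MeasurableSpace (α i)]
    (μ : ∀ i, Measure (α i)) [∀ i, IsProbabilityMeasure (μ i)] {s t : Set ι} (hst : Disjoint s t)
    {f g : (∀ i, α i) → ℝ} (hf : DependsOn f s) (hg : DependsOn g t)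
    (hfg : Integrable (fun φ => f φ * g φ) (Measure.pi μ)) :
    ∫ φ, f φ * g φ ∂Measure.pi μ = (∫ φ, f φ ∂Measure.pi μ) * ∫ φ, g φ ∂Measure.pi μ := by
  classical
  have hfs (χ φ : ∀ i, α i) : f (s.piecewise χ φ) = f χ :=
    hf fun i hi => Set.piecewise_eq_of_mem _ _ _ hi
  have hgt (χ φ : ∀ i, α i) : g (s.piecewise χ φ) = g φ :=
    hg fun i hi => Set.piecewise_eq_of_notMem _ _ _ (hst.notMem_of_mem_right hi)
  simp only [integral_pi_eq_integral_integral_piecewise μ s hfg, hfs, hgt, integral_const_mul,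
    integral_mul_const]

end ProductMeasure

section ContinuousMap

variable {X : Type*} [TopologicalSpace X] [CompactSpace X]

theorem integrable_continuousMap [MeasurableSpace X] [OpensMeasurableSpace X] (μ : Measure X)
    [IsFiniteMeasure μ] (f : C(X, ℝ)) : Integrable f μ :=
  f.continuous.integrable_of_hasCompactSupport (.of_compactSpace f)

/-- Integration against a finite measure on a compact space as a continuous linear functional. -/
noncomputable def integralFunctional [MeasurableSpace X] [BorelSpace X] (μ : Measure X)
    [IsFiniteMeasure μ] : C(X, ℝ) →L[ℝ] ℝ where
  toFun f := ∫ x, f x ∂μ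
  map_add' f g := integral_add (integrable_continuousMap μ f) (integrable_continuousMap μ g)
  map_smul' c f := integral_const_mul c f
  cont := (continuous_integral.comp (ContinuousMap.toLp 1 μ ℝ).continuous).congr fun f =>
    integral_congr_ae (ContinuousMap.coeFn_toLp μ f)

theorem integralFunctional_apply [MeasurableSpace X] [BorelSpace X] (μ : Measure X)
    [IsFiniteMeasure μ] (f : C(X, ℝ)) : integralFunctional μ f = ∫ x, f x ∂μ := rfl

theorem exp_continuousMap_apply (f : C(X, ℝ)) (x : X) :
    NormedSpace.exp f x = Real.exp (f x) := by
  rw [NormedSpace.exp_continuousMap_eq, Real.exp_eq_exp_ℝ]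
  rfl

end ContinuousMap

/-! ### Reflection positivity -/

section ReflectionPositivity

variable {V S : Type*} [TopologicalSpace S]

/-- The algebra `𝔄_R` of continuous observables of a spin configuration that are functions of the
spins in `R` only. -/
def observablesOn (S : Type*) [TopologicalSpace S] (R : Set V) : Subalgebra ℝ C(V → S, ℝ) where
  carrier := {h | DependsOn h R}
  mul_mem' hf hg _ _ e := congrArg₂ (· * ·) (hf e) (hg e)
  add_mem' hf hg _ _ e := congrArg₂ (· + ·) (hf e) (hg e)
  algebraMap_mem' _ _ _ _ := rfl

/-- The action of a permutation `θ` of the sites on observables, `(θh)(φ) = h(φ ∘ θ)`. -/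
def reflectObs (S : Type*) [TopologicalSpace S] (θ : Equiv.Perm V) :
    C(V → S, ℝ) →ₐ[ℝ] C(V → S, ℝ) :=
  ContinuousMap.compRightAlgHom ℝ ℝ ⟨fun φ => φ ∘ θ, by fun_prop⟩

theorem reflectObs_apply (θ : Equiv.Perm V) (h : C(V → S, ℝ)) (φ : V → S) :
    reflectObs S θ h φ = h (φ ∘ θ) := rfl

/-- The closed convex cone generated by the products `h · θh` with `h ∈ 𝔄_R`. It is a subsemiring
because these products are closed under multiplication. -/
def reflectionCone (S : Type*) [TopologicalSpace S] [CompactSpace S] (θ : Equiv.Perm V)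
    (R : Set V) : Subsemiring C(V → S, ℝ) :=
  ((observablesOn S R).toSubmonoid.map
    (MonoidHom.id _ * (reflectObs S θ : C(V → S, ℝ) →* C(V → S, ℝ)))).subsemiringClosure
    |>.topologicalClosure

variable [CompactSpace S] {θ : Equiv.Perm V} {R : Set V}

theorem mul_reflectObs_mem_reflectionCone {h : C(V → S, ℝ)} (hh : h ∈ observablesOn S R) :
    h * reflectObs S θ h ∈ reflectionCone S θ R :=
  Subsemiring.le_topologicalClosure _ (AddSubmonoid.subset_closure ⟨h, hh, rfl⟩)

theorem smul_mem_reflectionCone {c : ℝ} (hc : 0 ≤ c) {f : C(V → S, ℝ)}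
    (hf : f ∈ reflectionCone S θ R) : c • f ∈ reflectionCone S θ R := by
  have hsqrt : algebraMap ℝ C(V → S, ℝ) c =
      algebraMap ℝ _ (Real.sqrt c) * reflectObs S θ (algebraMap ℝ _ (Real.sqrt c)) := by
    rw [AlgHom.commutes, ← map_mul, Real.mul_self_sqrt hc]
  rw [Algebra.smul_def, hsqrt]
  exact mul_mem (mul_reflectObs_mem_reflectionCone (Subalgebra.algebraMap_mem _ _)) hf

theorem exp_mem_reflectionCone {f : C(V → S, ℝ)} (hf : f ∈ reflectionCone S θ R) :
    NormedSpace.exp f ∈ reflectionCone S θ R := by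
  rw [NormedSpace.exp_eq_tsum ℝ]
  exact tsum_mem (Subsemiring.isClosed_topologicalClosure _) fun n =>
    smul_mem_reflectionCone (inv_nonneg.2 n.factorial.cast_nonneg) (pow_mem hf n)

theorem exp_mem_observablesOn {h : C(V → S, ℝ)} (hh : h ∈ observablesOn S R) :
    NormedSpace.exp h ∈ observablesOn S R := fun φ ψ hφψ => by
  rw [exp_continuousMap_apply, exp_continuousMap_apply, hh hφψ]

theorem exp_add_reflectObs_add_mem_reflectionCone {A K : C(V → S, ℝ)}
    (hA : A ∈ observablesOn S R) (hK : K ∈ reflectionCone S θ R) :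
    NormedSpace.exp (A + reflectObs S θ A + K) ∈ reflectionCone S θ R := by
  have hcont : Continuous (reflectObs S θ) := ContinuousMap.continuous_precomp _
  rw [NormedSpace.exp_add, NormedSpace.exp_add, ← NormedSpace.map_exp (reflectObs S θ) hcont]
  exact mul_mem (mul_reflectObs_mem_reflectionCone (exp_mem_observablesOn hA))
    (exp_mem_reflectionCone hK)

theorem inner_comp_perm_mem_reflectionCone {E : Type*} [NormedAddCommGroup E]
    [InnerProductSpace ℝ E] [FiniteDimensional ℝ E] (u : C(V → S, E)) (hu : DependsOn u R)
    {f : C(V → S, ℝ)} (hf : ∀ φ, f φ = ⟪u φ, u (φ ∘ θ)⟫) : f ∈ reflectionCone S θ R := by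
  let b := stdOrthonormalBasis ℝ E
  let coord (k) : C(V → S, ℝ) := ⟨fun φ => ⟪b k, u φ⟫, by fun_prop⟩
  have hsum : f = ∑ k, coord k * reflectObs S θ (coord k) := by
    ext φ
    rw [hf, ← b.sum_inner_mul_inner, ContinuousMap.sum_apply]
    exact Finset.sum_congr rfl fun k _ => congrArg (· * _) (real_inner_comm _ _)
  rw [hsum]
  exact sum_mem fun k _ => mul_reflectObs_mem_reflectionCone fun φ ψ e =>
    congrArg (⟪b k, ·⟫) (hu e)

variable [Fintype V] [SecondCountableTopology S] [MeasurableSpace S]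
  [BorelSpace S] (ν : Measure S) [IsProbabilityMeasure ν]

theorem integral_mul_reflectObs_nonneg (hfix : ∀ x ∈ R, θ x ∈ R → θ x = x) {h : C(V → S, ℝ)}
    (hh : h ∈ observablesOn S R) :
    0 ≤ ∫ φ, (h * reflectObs S θ h) φ ∂Measure.pi fun _ : V => ν := by
  classical
  -- Conditionally on the spins `χ` in `P = R ∩ θ⁻¹R`, the observables `h` and `θh` are independent
  -- and identically distributed.
  let P : Set V := R ∩ θ ⁻¹' R
  rw [integral_pi_eq_integral_integral_piecewise _ P (integrable_continuousMap _ _)]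
  refine integral_nonneg fun χ => ?_
  let hχ : C(V → S, ℝ) := h.comp ⟨_, continuous_piecewise_right P χ⟩
  have hχ_dep : DependsOn hχ (R \ P) := dependsOn_comp_piecewise P χ hh
  have hχ_reflect (φ : V → S) : h (P.piecewise χ φ ∘ θ) = hχ (φ ∘ θ) := hh fun x hx => by
    by_cases hxP : x ∈ P
    · simp [hxP, hfix x hx hxP.2]
    · have hθx : θ x ∉ P := fun hθP => hxP ⟨hx, hθP.1⟩
      simp [hxP, hθx]
  have hχθ_dep : DependsOn (reflectObs S θ hχ) (θ '' (R \ P)) := fun φ ψ e =>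
    hχ_dep fun x hx => e (θ x) ⟨x, hx, rfl⟩
  have hdisj : Disjoint (R \ P) (θ '' (R \ P)) := by
    rw [Set.disjoint_right]
    rintro _ ⟨x, hx, rfl⟩ hθx
    exact hx.2 ⟨hx.1, hθx.1⟩
  calc (0 : ℝ) ≤ (∫ φ, hχ φ ∂Measure.pi fun _ => ν) * ∫ φ, hχ φ ∂Measure.pi fun _ => ν :=
        mul_self_nonneg _
    _ = (∫ φ, hχ φ ∂Measure.pi fun _ => ν) *
          ∫ φ, reflectObs S θ hχ φ ∂Measure.pi fun _ => ν :=
        congrArg _ (integral_pi_comp_perm ν θ hχ).symm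
    _ = ∫ φ, hχ φ * reflectObs S θ hχ φ ∂Measure.pi fun _ => ν :=
        (integral_mul_of_dependsOn_of_disjoint _ hdisj hχ_dep hχθ_dep
          (integrable_continuousMap _ (hχ * reflectObs S θ hχ))).symm
    _ = ∫ φ, (h * reflectObs S θ h) (P.piecewise χ φ) ∂Measure.pi fun _ => ν :=
        integral_congr_ae (.of_forall fun φ => congrArg (hχ φ * ·) (hχ_reflect φ).symm)

theorem integral_nonneg_of_mem_reflectionCone (hfix : ∀ x ∈ R, θ x ∈ R → θ x = x)
    {f : C(V → S, ℝ)} (hf : f ∈ reflectionCone S θ R) :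
    0 ≤ ∫ φ, f φ ∂Measure.pi fun _ : V => ν := by
  rw [← integralFunctional_apply]
  refine closure_minimal (fun g hg => ?_)
    (isClosed_Ici.preimage (integralFunctional (Measure.pi fun _ : V => ν)).continuous) hf
  rw [Set.mem_preimage, Set.mem_Ici]
  induction hg using AddSubmonoid.closure_induction with
  | mem g hg =>
    obtain ⟨h, hh, rfl⟩ := hg
    exact integral_mul_reflectObs_nonneg ν hfix hh
  | zero => rw [map_zero]
  | add f g _ _ hf hg =>
    rw [map_add]
    exact add_nonneg hf hg

end ReflectionPositivity

/-! ### Pair interactions -/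

section PairInteraction

variable {V S E : Type*} [TopologicalSpace S] [NormedAddCommGroup E] [InnerProductSpace ℝ E]

/-- The observable `φ ↦ ⟪σ(φ x), σ(φ y)⟫`, where `σ` represents spins by vectors. -/
def spinInner (σ : C(S, E)) (x y : V) : C(V → S, ℝ) :=
  ⟨fun φ => ⟪σ (φ x), σ (φ y)⟫, by fun_prop⟩

theorem spinInner_apply (σ : C(S, E)) (x y : V) (φ : V → S) :
    spinInner σ x y φ = ⟪σ (φ x), σ (φ y)⟫ := rfl

theorem spinInner_comm (σ : C(S, E)) (x y : V) : spinInner σ x y = spinInner σ y x :=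
  ContinuousMap.ext fun _ => real_inner_comm _ _

/-- The interaction `∑_{x,y} J(x,y) ⟪σ(φ x), σ(φ y)⟫` with couplings `J`, summed over ordered
pairs. It enters the Boltzmann weight as its exponential, so that `J` absorbs the inverse
temperature and ferromagnetic couplings are nonnegative. -/
def pairInteraction [Fintype V] (σ : C(S, E)) (J : V → V → ℝ) : C(V → S, ℝ) :=
  ∑ x, ∑ y, J x y • spinInner σ x y

/-- Compatibility of the couplings `J` with the involution `θ` that exchanges the two halves `R` and
`θR` of the system, which may overlap in fixed points of `θ` only: `J` is invariant, and it couples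
a site outside `θR` to one outside `R` only if they are mirror images of each other, and then
ferromagnetically. -/
structure IsReflectionSymmetric (J : V → V → ℝ) (θ : Equiv.Perm V) (R : Set V) : Prop where
  involutive : Function.Involutive θ
  mem_or_mem : ∀ x, x ∈ R ∨ θ x ∈ R
  fixed_of_mem : ∀ x ∈ R, θ x ∈ R → θ x = x
  map_map : ∀ x y, J (θ x) (θ y) = J x y
  nonneg : ∀ x, 0 ≤ J x (θ x)
  eq_of_crossing : ∀ x y, J x y ≠ 0 → ¬(x ∈ R ∧ y ∈ R) → ¬(θ x ∈ R ∧ θ y ∈ R) → y = θ x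

variable (σ : C(S, E)) {J : V → V → ℝ} {θ : Equiv.Perm V} {R : Set V}

theorem spinInner_map_mem_reflectionCone [FiniteDimensional ℝ E] [CompactSpace S]
    (hθ : Function.Involutive θ) {x : V} (hx : x ∈ R ∨ θ x ∈ R) :
    spinInner σ x (θ x) ∈ reflectionCone S θ R := by
  wlog hxR : x ∈ R generalizing x
  · have hθx := hx.resolve_left hxR
    simpa only [hθ x, spinInner_comm] using this (.inl hθx) hθx
  exact inner_comp_perm_mem_reflectionCone ⟨fun φ => σ (φ x), by fun_prop⟩
    (fun _ _ hφψ => congrArg σ (hφψ x hxR)) fun _ => rfl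

variable [Fintype V]

theorem pairInteraction_apply (J : V → V → ℝ) (φ : V → S) :
    pairInteraction σ J φ = ∑ x, ∑ y, J x y * ⟪σ (φ x), σ (φ y)⟫ := by
  simp only [pairInteraction, ContinuousMap.sum_apply, ContinuousMap.smul_apply, smul_eq_mul,
    spinInner_apply]

theorem pairInteraction_add (J J' : V → V → ℝ) :
    pairInteraction σ (J + J') = pairInteraction σ J + pairInteraction σ J' := by
  simp only [pairInteraction, Pi.add_apply, add_smul, Finset.sum_add_distrib]

theorem pairInteraction_comp_perm (J : V → V → ℝ) (θ : Equiv.Perm V) (φ : V → S) :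
    pairInteraction σ (fun x y => J (θ x) (θ y)) (φ ∘ θ) = pairInteraction σ J φ := by
  simp only [pairInteraction_apply, Function.comp_apply]
  rw [← Equiv.sum_comp θ fun x => ∑ y, J x y * ⟪σ (φ x), σ (φ y)⟫]
  exact Finset.sum_congr rfl fun x _ =>
    Equiv.sum_comp θ fun y => J (θ x) y * ⟪σ (φ (θ x)), σ (φ y)⟫

theorem dependsOn_pairInteraction (hJ : ∀ x y, J x y ≠ 0 → x ∈ R ∧ y ∈ R) :
    DependsOn (pairInteraction σ J) R := by
  intro φ ψ hφψ
  simp only [pairInteraction_apply]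
  refine Finset.sum_congr rfl fun x _ => Finset.sum_congr rfl fun y _ => ?_
  by_cases hxy : J x y = 0
  · simp only [hxy, zero_mul]
  · rw [hφψ x (hJ x y hxy).1, hφψ y (hJ x y hxy).2]

/-- The two-point function `⟨σ(φ x) · σ(φ y)⟩` of the Gibbs measure with single-spin distribution
`ν` and couplings `J`. -/
noncomputable def twoPoint [MeasurableSpace S] (ν : Measure S) (σ : C(S, E)) (J : V → V → ℝ)
    (x y : V) : ℝ :=
  (∫ φ, Real.exp (pairInteraction σ J φ) ∂Measure.pi fun _ => ν)⁻¹ *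
    ∫ φ, spinInner σ x y φ * Real.exp (pairInteraction σ J φ) ∂Measure.pi fun _ => ν

theorem twoPoint_comm [MeasurableSpace S] (ν : Measure S) (J : V → V → ℝ) (x y : V) :
    twoPoint ν σ J x y = twoPoint ν σ J y x := by
  rw [twoPoint, twoPoint, spinInner_comm]

theorem twoPoint_map_map [MeasurableSpace S] (ν : Measure S) [SigmaFinite ν] (τ : Equiv.Perm V)
    (hτ : ∀ x y, J (τ x) (τ y) = J x y) (x y : V) :
    twoPoint ν σ J (τ x) (τ y) = twoPoint ν σ J x y := by
  have hinv (φ : V → S) : pairInteraction σ J (φ ∘ τ) = pairInteraction σ J φ := by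
    simpa only [hτ] using pairInteraction_comp_perm σ J τ φ
  rw [twoPoint, twoPoint, ← integral_pi_comp_perm ν τ fun φ =>
    spinInner σ x y φ * Real.exp (pairInteraction σ J φ)]
  simp only [hinv, spinInner_apply, Function.comp_apply]

variable [FiniteDimensional ℝ E] [CompactSpace S]

theorem pairInteraction_mem_reflectionCone (hθ : Function.Involutive θ)
    (hR : ∀ x, x ∈ R ∨ θ x ∈ R) (hJ : ∀ x y, J x y ≠ 0 → y = θ x) (hJ₀ : ∀ x, 0 ≤ J x (θ x)) :
    pairInteraction σ J ∈ reflectionCone S θ R := by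
  refine sum_mem fun x _ => sum_mem fun y _ => ?_
  by_cases hxy : J x y = 0
  · simp only [hxy, zero_smul, zero_mem]
  · obtain rfl := hJ x y hxy
    exact smul_mem_reflectionCone (hJ₀ x) (spinInner_map_mem_reflectionCone σ hθ (hR x))

theorem IsReflectionSymmetric.exp_pairInteraction_mem_reflectionCone
    (hJ : IsReflectionSymmetric J θ R) :
    NormedSpace.exp (pairInteraction σ J) ∈ reflectionCone S θ R := by
  classical
  -- A pair inside `R ∩ θR` contributes one half to the interaction of each of the two halves.
  let w (x y : V) : ℝ := if x ∈ R ∧ y ∈ R then if θ x ∈ R ∧ θ y ∈ R then 1 / 2 else 1 else 0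
  let A (x y : V) : ℝ := w x y * J x y
  let K (x y : V) : ℝ := if x ∈ R ∧ y ∈ R ∨ θ x ∈ R ∧ θ y ∈ R then 0 else J x y
  have hw (x y : V) :
      w x y + w (θ x) (θ y) = if x ∈ R ∧ y ∈ R ∨ θ x ∈ R ∧ θ y ∈ R then 1 else 0 := by
    by_cases h : x ∈ R ∧ y ∈ R <;> by_cases hθ : θ x ∈ R ∧ θ y ∈ R <;>
      norm_num [w, hJ.involutive _, h, hθ]
  have hsplit : J = A + (fun x y => A (θ x) (θ y)) + K := by
    ext x y
    simp only [A, K, Pi.add_apply, hJ.map_map, ← add_mul, hw]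
    split_ifs <;> ring
  have hreflect : pairInteraction σ (fun x y => A (θ x) (θ y)) =
      reflectObs S θ (pairInteraction σ A) := by
    ext φ
    rw [reflectObs_apply, ← pairInteraction_comp_perm σ _ θ]
    simp only [hJ.involutive _]
  rw [hsplit, pairInteraction_add, pairInteraction_add, hreflect]
  refine exp_add_reflectObs_add_mem_reflectionCone (dependsOn_pairInteraction σ fun x y hxy => ?_)
    (pairInteraction_mem_reflectionCone σ hJ.involutive hJ.mem_or_mem (fun x y hxy => ?_)
      fun x => ?_)
  · by_contra hR
    simp only [A, w, if_neg hR, zero_mul, ne_eq, not_true] at hxy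
  · simp only [K, ne_eq, ite_eq_left_iff, Classical.not_imp, not_or] at hxy
    exact hJ.eq_of_crossing x y hxy.2 hxy.1.1 hxy.1.2
  · simp only [K]
    split_ifs
    exacts [le_rfl, hJ.nonneg x]

variable [SecondCountableTopology S] [MeasurableSpace S]
  [BorelSpace S] (ν : Measure S) [IsProbabilityMeasure ν]

theorem IsReflectionSymmetric.sum_mul_twoPoint_nonneg (hJ : IsReflectionSymmetric J θ R)
    {ι : Type*} [Fintype ι] (w : ι → ℝ) {p : ι → V} (hp : ∀ a, p a ∈ R) :
    0 ≤ ∑ a, ∑ b, w a * w b * twoPoint ν σ J (p a) (θ (p b)) := by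
  let u : C(V → S, E) := ⟨fun φ => ∑ a, w a • σ (φ (p a)), by fun_prop⟩
  let f : C(V → S, ℝ) := ∑ a, ∑ b, (w a * w b) • spinInner σ (p a) (θ (p b))
  have hu : DependsOn u R := fun φ ψ hφψ =>
    Finset.sum_congr rfl fun a _ => congrArg (w a • σ ·) (hφψ (p a) (hp a))
  have hf : f ∈ reflectionCone S θ R := inner_comp_perm_mem_reflectionCone u hu fun φ => by
    simp only [f, u, ContinuousMap.sum_apply, ContinuousMap.smul_apply, ContinuousMap.coe_mk,
      spinInner_apply, Function.comp_apply, sum_inner]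
    refine Finset.sum_congr rfl fun a _ => ?_
    simp only [inner_sum, real_inner_smul_left, real_inner_smul_right, smul_eq_mul, mul_assoc,
      mul_left_comm (w a)]
  have hsum : ∑ a, ∑ b, w a * w b * twoPoint ν σ J (p a) (θ (p b)) =
      (∫ φ, Real.exp (pairInteraction σ J φ) ∂Measure.pi fun _ => ν)⁻¹ *
        ∫ φ, (f * NormedSpace.exp (pairInteraction σ J)) φ ∂Measure.pi fun _ => ν := by
    simp only [f, ← integralFunctional_apply, Finset.sum_mul, smul_mul_assoc, map_sum, map_smul,
      Finset.mul_sum, smul_eq_mul]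
    refine Finset.sum_congr rfl fun a _ => Finset.sum_congr rfl fun b _ => ?_
    simp only [integralFunctional_apply, ContinuousMap.mul_apply, exp_continuousMap_apply, twoPoint]
    ring
  rw [hsum]
  exact mul_nonneg (inv_nonneg.2 (integral_nonneg fun φ => Real.exp_nonneg _))
    (integral_nonneg_of_mem_reflectionCone ν hJ.fixed_of_mem
      (mul_mem hf (hJ.exp_pairInteraction_mem_reflectionCone σ)))

end PairInteraction

/-! ### Reflections of the torus -/

section Torus

theorem eq_zero_or_eq_of_dvd_of_lt_two_mul {k n : ℕ} (h : k ∣ n) (hn : n < 2 * k) :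
    n = 0 ∨ n = k := by
  obtain ⟨q, rfl⟩ := h
  have hq : q < 2 := lt_of_mul_lt_mul_left (hn.trans_eq (mul_comm 2 k)) k.zero_le
  interval_cases q <;> simp

variable {d L : ℕ}

theorem torusAdj_iff_sub (x y : TorusPt d L) :
    torusAdj x y ↔ ∃ j, y - x = Pi.single j 1 ∨ y - x = Pi.single j (-1) := by
  have hupdate (j : Fin d) (a : ZMod L) : y = Function.update x j (x j + a) ↔
      y - x = Pi.single j a := by
    rw [sub_eq_iff_eq_add']
    refine Eq.congr_right (funext fun k => ?_)
    by_cases hk : k = j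
    · subst hk; simp
    · simp [hk]
  simp only [torusAdj, sub_eq_add_neg (x _), hupdate]

/-- The ferromagnetic nearest-neighbour couplings of the torus at inverse temperature `β`. The
factor `1 / 2` accounts for the sum over ordered pairs in `pairInteraction`. -/
noncomputable def nnCoupling (β : ℝ) (x y : TorusPt d L) : ℝ := if torusAdj x y then β / 2 else 0

theorem nnCoupling_add_left (β : ℝ) (v x y : TorusPt d L) :
    nnCoupling β (v + x) (v + y) = nnCoupling β x y := by
  simp only [nnCoupling, torusAdj_iff_sub, add_sub_add_left_eq_sub]

/-- The reflection of the torus that maps the `i`-th coordinate `a` to `c - a`. -/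
def coordReflection (i : Fin d) (c : ZMod L) : Equiv.Perm (TorusPt d L) :=
  Function.Involutive.toPerm (fun x => Function.update x i (c - x i)) fun x => by simp

variable (i : Fin d) (c : ZMod L)

theorem coordReflection_apply (x : TorusPt d L) :
    coordReflection i c x = Function.update x i (c - x i) := rfl

theorem coordReflection_apply_self (x : TorusPt d L) : coordReflection i c x i = c - x i :=
  Function.update_self ..

theorem coordReflection_involutive : Function.Involutive (coordReflection (d := d) i c) :=
  Function.Involutive.toPerm_involutive _

theorem coordReflection_add_single {v : TorusPt d L} (hv : v i = 0) (a : ZMod L) :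
    coordReflection i c (v + Pi.single i a) = v + Pi.single i (c - a) := by
  ext k
  by_cases hk : k = i
  · subst hk; simp [coordReflection_apply, hv]
  · simp [coordReflection_apply, hk]

theorem coordReflection_sub_coordReflection (x y : TorusPt d L) :
    coordReflection i c y - coordReflection i c x = coordReflection i 0 (y - x) := by
  ext k
  by_cases hk : k = i
  · subst hk; simp [coordReflection_apply]
  · simp [coordReflection_apply, hk]

theorem torusAdj_coordReflection {x y : TorusPt d L} (h : torusAdj x y) :
    torusAdj (coordReflection i c x) (coordReflection i c y) := by
  simp only [torusAdj_iff_sub, coordReflection_sub_coordReflection] at h ⊢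
  obtain ⟨j, h⟩ := h
  refine ⟨j, ?_⟩
  by_cases hj : j = i
  · subst hj
    have hsingle := coordReflection_add_single (L := L) j 0 (v := 0) rfl
    simp only [zero_add, zero_sub] at hsingle
    rcases h with h | h <;> simp [h, hsingle]
  · have hself : coordReflection i 0 (y - x) = y - x := by
      have hi : (y - x) i = 0 := by
        rcases h with h | h <;> rw [h, Pi.single_eq_of_ne (Ne.symm hj)]
      rw [coordReflection_apply, hi, sub_zero, ← hi, Function.update_eq_self]
    rwa [hself]

theorem nnCoupling_coordReflection (β : ℝ) (x y : TorusPt d L) :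
    nnCoupling β (coordReflection i c x) (coordReflection i c y) = nnCoupling β x y := by
  have h : torusAdj (coordReflection i c x) (coordReflection i c y) ↔ torusAdj x y := by
    refine ⟨fun h => ?_, torusAdj_coordReflection i c⟩
    simpa only [coordReflection_involutive i c _] using torusAdj_coordReflection i c h
  simp only [nnCoupling, h]

variable [NeZero L]

theorem zmod_val_add_val_neg_sub_add {e : ℕ} (he : e ≤ 1) (a : ZMod L) :
    a.val + (-e - a).val + e = 0 ∨ a.val + (-e - a).val + e = L := by
  refine eq_zero_or_eq_of_dvd_of_lt_two_mul ((ZMod.natCast_eq_zero_iff _ _).1 ?_) ?_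
  · push_cast [ZMod.natCast_val, ZMod.cast_id]
    ring
  · have := a.val_lt
    have := (-e - a).val_lt
    omega

theorem zmod_val_add_one (a : ZMod L) :
    (a + 1).val = a.val + 1 ∨ (a + 1).val = 0 ∧ a.val + 1 = L := by
  have h : (a + 1).val = (a.val + 1) % L := by
    rw [← ZMod.val_natCast]
    push_cast [ZMod.natCast_val, ZMod.cast_id]
    rfl
  rcases (Nat.succ_le_of_lt a.val_lt).lt_or_eq with hlt | heq
  · exact .inl (h.trans (Nat.mod_eq_of_lt hlt))
  · exact .inr ⟨h.trans (Nat.mod_eq_zero_of_dvd heq.symm.dvd), heq⟩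

/-- The half of the circle `ℤ/Lℤ` bounded by fixed points and fixed edges of `a ↦ -e - a`, for
`e = 0` or `e = 1`. -/
def halfCircle (L e : ℕ) : Set (ZMod L) := {a | 2 * a.val + e ≤ L}

variable {e : ℕ}

theorem mem_halfCircle_or_mem (he : e ≤ 1) (a : ZMod L) :
    a ∈ halfCircle L e ∨ -e - a ∈ halfCircle L e := by
  have := zmod_val_add_val_neg_sub_add he a
  simp only [halfCircle, Set.mem_ofPred_eq]
  omega

theorem neg_sub_eq_self_of_mem_halfCircle (he : e ≤ 1) {a : ZMod L}
    (ha : a ∈ halfCircle L e) (ha' : -e - a ∈ halfCircle L e) : -e - a = a := by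
  have := zmod_val_add_val_neg_sub_add he a
  simp only [halfCircle, Set.mem_ofPred_eq] at ha ha'
  exact ZMod.val_injective L (by omega)

theorem eq_of_crossing_halfCircle (he : e ≤ 1) {a b : ZMod L} (hab : b - a = 1 ∨ b - a = -1)
    (h : ¬(a ∈ halfCircle L e ∧ b ∈ halfCircle L e))
    (h' : ¬(-e - a ∈ halfCircle L e ∧ -e - b ∈ halfCircle L e)) : b = -e - a := by
  wlog hab' : b = a + 1 generalizing a b
  · have hba : a = b + 1 := by
      rcases hab with hab | hab
      · exact absurd (sub_eq_iff_eq_add'.1 hab) hab'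
      · rw [← neg_inj, neg_sub, neg_neg] at hab
        exact sub_eq_iff_eq_add'.1 hab
    rw [this (.inl (sub_eq_iff_eq_add'.2 hba)) (mt And.symm h) (mt And.symm h') hba, sub_sub_cancel]
  subst hab'
  have := zmod_val_add_val_neg_sub_add he a
  have := zmod_val_add_val_neg_sub_add he (a + 1)
  have := zmod_val_add_one a
  have := (-e - a).val_lt
  have := (-e - (a + 1)).val_lt
  simp only [halfCircle, Set.mem_ofPred_eq] at h h'
  exact ZMod.val_injective L (by omega)

theorem isReflectionSymmetric_nnCoupling (he : e ≤ 1) {β : ℝ} (hβ : 0 ≤ β) :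
    IsReflectionSymmetric (nnCoupling β) (coordReflection i (-e : ZMod L))
      {x | x i ∈ halfCircle L e} where
  involutive := coordReflection_involutive i _
  mem_or_mem x := by
    simpa only [Set.mem_ofPred_eq, coordReflection_apply_self] using mem_halfCircle_or_mem he (x i)
  fixed_of_mem x hx hx' := by
    rw [Set.mem_ofPred_eq, coordReflection_apply_self] at hx'
    rw [coordReflection_apply, neg_sub_eq_self_of_mem_halfCircle he hx hx', Function.update_eq_self]
  map_map := nnCoupling_coordReflection i _ β
  nonneg x := by
    rw [nnCoupling]
    split_ifs
    exacts [by positivity, le_rfl]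
  eq_of_crossing x y hJ hR hR' := by
    have hadj : torusAdj x y := by
      by_contra h
      exact hJ (if_neg h)
    simp only [Set.mem_ofPred_eq, coordReflection_apply_self] at hR hR'
    obtain ⟨j, hj⟩ := (torusAdj_iff_sub x y).1 hadj
    have hne (k : Fin d) (hk : k ≠ j) : y k = x k := by
      rw [← sub_eq_zero]
      rcases hj with hj | hj <;> exact (congrFun hj k).trans (Pi.single_eq_of_ne hk _)
    obtain rfl | hij := eq_or_ne i j
    · exact Function.eq_update_iff.2 ⟨eq_of_crossing_halfCircle he
        (by simpa using hj.imp (congrFun · i) (congrFun · i)) hR hR', hne⟩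
    · rw [hne i hij, and_self] at hR hR'
      exact ((mem_halfCircle_or_mem he (x i)).elim hR hR').elim

end Torus

/-! ### Monotonicity along an axis -/

theorem antitoneOn_of_convex_of_symm {u : ℕ → ℝ} {L : ℕ}
    (hconv : ∀ n, n + 1 < L → 2 * u (n + 1) ≤ u n + u (n + 2))
    (hsymm : ∀ n ≤ L, u (L - n) = u n) : AntitoneOn u {n | 2 * n ≤ L} := by
  have hincr {n k : ℕ} (hnk : n ≤ k) (hk : k < L) : u (n + 1) - u n ≤ u (k + 1) - u k := by
    induction k, hnk using Nat.le_induction with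
    | base => rfl
    | succ k _ ih => linarith [ih (by omega), hconv k hk]
  have hord : Set.OrdConnected {n : ℕ | 2 * n ≤ L} :=
    ⟨fun a _ b hb c hc => (Nat.mul_le_mul_left 2 hc.2).trans hb⟩
  refine antitoneOn_of_add_one_le hord fun n _ _ hn => ?_
  rw [Set.mem_ofPred_eq] at hn
  have hmirror := hincr (n := n) (k := L - (n + 1)) (by omega) (by omega)
  rw [show L - (n + 1) + 1 = L - n by omega, hsymm n (by omega), hsymm (n + 1) (by omega)]
    at hmirror
  linarith

section AxisSum

variable {d L : ℕ} [NeZero L] {S E : Type*} [TopologicalSpace S]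
  [NormedAddCommGroup E] [InnerProductSpace ℝ E] [MeasurableSpace S] (ν : Measure S)
  (σ : C(S, E)) (β : ℝ) (i : Fin d)

/-- The sum of the nearest-neighbour two-point functions from the origin to `y + a e_i` and to
`a e_i`. -/
noncomputable def axisTwoPointSum (y : TorusPt d L) (a : ZMod L) : ℝ :=
  twoPoint ν σ (nnCoupling β) 0 (y + Pi.single i a) + twoPoint ν σ (nnCoupling β) 0 (Pi.single i a)

theorem twoPoint_nnCoupling_eq_zero_sub [SigmaFinite ν] (x y : TorusPt d L) :
    twoPoint ν σ (nnCoupling β) x y = twoPoint ν σ (nnCoupling β) 0 (y - x) := by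
  simpa using (twoPoint_map_map σ ν (Equiv.addLeft x) (nnCoupling_add_left β x) 0 (y - x))

theorem twoPoint_nnCoupling_single_neg [SigmaFinite ν] {y : TorusPt d L} (hy : y i = 0)
    (a : ZMod L) : twoPoint ν σ (nnCoupling β) 0 (y + Pi.single i (-a)) =
      twoPoint ν σ (nnCoupling β) 0 (y + Pi.single i a) := by
  have h := twoPoint_map_map σ ν (coordReflection i 0) (nnCoupling_coordReflection i 0 β) 0
    (y + Pi.single i a)
  have hzero : coordReflection i (0 : ZMod L) 0 = 0 := by simp [coordReflection_apply]
  rwa [coordReflection_add_single i 0 hy, zero_sub, hzero] at h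

theorem twoPoint_nnCoupling_neg_add [SigmaFinite ν] {y : TorusPt d L} (hy : y i = 0) (a : ZMod L) :
    twoPoint ν σ (nnCoupling β) 0 (-y + Pi.single i a) =
      twoPoint ν σ (nnCoupling β) 0 (y + Pi.single i a) := by
  rw [← twoPoint_nnCoupling_single_neg ν σ β i hy, twoPoint_comm, twoPoint_nnCoupling_eq_zero_sub,
    Pi.single_neg]
  congr 1
  abel

theorem axisTwoPointSum_neg [SigmaFinite ν] {y : TorusPt d L} (hy : y i = 0) (a : ZMod L) :
    axisTwoPointSum ν σ β i y (-a) = axisTwoPointSum ν σ β i y a := by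
  have h := twoPoint_nnCoupling_single_neg ν σ β i (y := 0) rfl a
  rw [zero_add, zero_add] at h
  rw [axisTwoPointSum, axisTwoPointSum, twoPoint_nnCoupling_single_neg ν σ β i hy, h]

theorem twoPoint_nnCoupling_coordReflection [SigmaFinite ν] {v w : TorusPt d L} (hw : w i = 0)
    (c a b : ZMod L) :
    twoPoint ν σ (nnCoupling β) (v + Pi.single i a)
        (coordReflection i c (w + Pi.single i b)) =
      twoPoint ν σ (nnCoupling β) 0 (w - v + Pi.single i (c - b - a)) := by
  rw [coordReflection_add_single i c hw, twoPoint_nnCoupling_eq_zero_sub,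
    add_sub_add_comm, ← Pi.single_sub]

variable [CompactSpace S] [FiniteDimensional ℝ E] [SecondCountableTopology S] [BorelSpace S]
  [IsProbabilityMeasure ν] {β}

theorem two_mul_axisTwoPointSum_le (hβ : 0 ≤ β) {e : ℕ} (he : e ≤ 1) {y : TorusPt d L}
    (hy : y i = 0) {a b : ZMod L} (ha : a ∈ halfCircle L e) (hb : b ∈ halfCircle L e) :
    2 * axisTwoPointSum ν σ β i y (a + b + e) ≤
      axisTwoPointSum ν σ β i y (2 * a + e) + axisTwoPointSum ν σ β i y (2 * b + e) := by
  have hzero : (0 : TorusPt d L) i = 0 := rfl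
  let p : Fin 4 → TorusPt d L :=
    ![y + Pi.single i a, 0 + Pi.single i a, y + Pi.single i b, 0 + Pi.single i b]
  have hpos := (isReflectionSymmetric_nnCoupling i he hβ).sum_mul_twoPoint_nonneg σ ν
    ![1, 1, -1, -1] (p := p) (by simp [p, Fin.forall_fin_succ, hy, ha, hb])
  have hab : (-e - a - b : ZMod L) = -(a + b + e) := by ring
  have hba : (-e - b - a : ZMod L) = -(a + b + e) := by ring
  have haa : (-e - a - a : ZMod L) = -(2 * a + e) := by ring
  have hbb : (-e - b - b : ZMod L) = -(2 * b + e) := by ring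
  simp only [p, Fin.sum_univ_four, Matrix.cons_val,
    twoPoint_nnCoupling_coordReflection ν σ β i hy,
    twoPoint_nnCoupling_coordReflection ν σ β i hzero, hab, hba, haa, hbb, sub_self, zero_sub,
    sub_zero, twoPoint_nnCoupling_neg_add ν σ β i hy] at hpos
  rw [← axisTwoPointSum_neg ν σ β i hy (a + b + e), ← axisTwoPointSum_neg ν σ β i hy (2 * a + e),
    ← axisTwoPointSum_neg ν σ β i hy (2 * b + e)]
  simp only [axisTwoPointSum]
  simp only [zero_add] at hpos
  linarith

theorem spin_avg_two_point_nonincreasing_general (hβ : 0 ≤ β) {y : TorusPt d L} (hy : y i = 0) :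
    AntitoneOn (fun n : ℕ => twoPoint ν σ (nnCoupling β) 0 (y + Pi.single i (n : ZMod L)) +
      twoPoint ν σ (nnCoupling β) 0 (Pi.single i (n : ZMod L))) {n | 2 * n ≤ L} := by
  refine antitoneOn_of_convex_of_symm (u := fun n => axisTwoPointSum ν σ β i y n)
    (fun n hn => ?_) fun n hn => ?_
  · have hmem {k e : ℕ} (hk : 2 * k + e ≤ L) (hkL : k < L) : (k : ZMod L) ∈ halfCircle L e := by
      rwa [halfCircle, Set.mem_ofPred_eq, ZMod.val_cast_of_lt hkL]
    obtain ⟨s, e, he, rfl⟩ : ∃ s e : ℕ, e ≤ 1 ∧ n = 2 * s + e :=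
      ⟨n / 2, n % 2, by omega, by omega⟩
    have h := two_mul_axisTwoPointSum_le ν σ i hβ he hy (hmem (k := s) (by omega) (by omega))
      (hmem (k := s + 1) (by omega) (by omega))
    convert h using 3 <;> push_cast <;> ring
  · rw [Nat.cast_sub hn, ZMod.natCast_self, zero_sub, axisTwoPointSum_neg ν σ β i hy]

end AxisSum

section Sphere

variable {d L N : ℕ}

theorem isProbabilityMeasure_sphereUniform (hN : 1 ≤ N) :
    IsProbabilityMeasure (sphereUniform N) := by
  have : Nonempty (Fin N) := ⟨⟨0, hN⟩⟩
  have : NeZero (volume : Measure (EuclideanSpace ℝ (Fin N))).toSphere :=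
    ⟨Measure.toSphere_ne_zero _⟩
  rw [sphereUniform]
  infer_instance

/-- The inclusion of the sphere `S^{N-1}` into `ℝ^N`. -/
def sphereInclusion (N : ℕ) : C(SpinSphere N, EuclideanSpace ℝ (Fin N)) :=
  ⟨Subtype.val, continuous_subtype_val⟩

theorem axisPt_eq_single (i : Fin d) (n : ℕ) : axisPt d L i n = Pi.single i (n : ZMod L) := by
  ext k
  rw [axisPt, Pi.single_apply]

theorem pairInteraction_nnCoupling_eq [NeZero L] (β : ℝ) (φ : SpinCfg d L N) :
    pairInteraction (sphereInclusion N) (nnCoupling β) φ = -β * hamiltonian φ := by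
  simp only [hamiltonian, pairInteraction_apply, nnCoupling, Finset.mul_sum]
  refine Finset.sum_congr rfl fun x _ => Finset.sum_congr rfl fun y _ => ?_
  rw [ite_mul, mul_ite, mul_ite]
  congr 1 <;> simp only [sphereInclusion, ContinuousMap.coe_mk] <;> ring

theorem corrDot_eq_twoPoint [NeZero L] (β : ℝ) (x y : TorusPt d L) :
    corrDot d L N β x y = twoPoint (sphereUniform N) (sphereInclusion N) (nnCoupling β) x y := by
  simp only [corrDot, gibbsExp, ← pairInteraction_nnCoupling_eq]
  rfl

end Sphere

/-- **Site-monotonicity for the spin O(N) model along an axis.**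
For every direction `i`, every `y ∈ T_L` with `y·e_i = 0`, the function
`n ↦ ⟨φ_o ⬝ φ_{y + n e_i}⟩ + ⟨φ_o ⬝ φ_{n e_i}⟩` is non-increasing for integer
`n ∈ (0, L/2]`. -/
theorem spin_avg_two_point_nonincreasing
    (d L N : ℕ) [NeZero L] (hd : 2 ≤ d) (hL : Even L) (hN : 1 ≤ N)
    (β : ℝ) (hβ : 0 ≤ β) (i : Fin d) (y : TorusPt d L) (hy : y i = 0)
    (m n : ℕ) (hm : 0 < m) (hmn : m ≤ n) (hn : 2 * n ≤ L) :
    corrDot d L N β (torusOrigin d L) (fun k => y k + if k = i then (n : ZMod L) else 0)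
        + corrDot d L N β (torusOrigin d L) (axisPt d L i n) ≤
      corrDot d L N β (torusOrigin d L) (fun k => y k + if k = i then (m : ZMod L) else 0)
        + corrDot d L N β (torusOrigin d L) (axisPt d L i m) := by
  have := isProbabilityMeasure_sphereUniform hN
  have hadd (k : ℕ) : (fun j => y j + if j = i then (k : ZMod L) else 0) = y + Pi.single i ↑k :=
    congrArg (y + ·) (axisPt_eq_single i k)
  simp only [corrDot_eq_twoPoint, hadd, axisPt_eq_single]
  exact spin_avg_two_point_nonincreasing_general (sphereUniform N) (sphereInclusion N) i hβ hy
    ((Nat.mul_le_mul_left 2 hmn).trans hn) hn hmn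
end

section
/- Let Θ be the reflection through sites in a plane orthogonal to e_i, and let A ⊆ T_L. Setting A^+ = (A ∩ T_L^+) ∪ Θ(A ∩ T_L^+) and A^- = (A ∩ T_L^-) ∪ Θ(A ∩ T_L^-), one has ∑_{x,y ∈ A, x ≠ y} ⟨φ_x^1 φ_y^1⟩_{L,N,β} ≤ (1/2) ( ∑_{x,y ∈ A^+, x ≠ y} ⟨φ_x^1 φ_y^1⟩_{L,N,β} + ∑_{x,y ∈ A^-, x ≠ y} ⟨φ_x^1 φ_y^1⟩_{L,N,β} ), where all sums are over ordered pairs of distinct vertices. -/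
open MeasureTheory Metric
open scoped RealInnerProductSpace BigOperators

/-- Reflection of torus sites through the plane of sites `{x : x_i = m}`:
`Θ(x)_i = 2m - x_i (mod L)` and the other coordinates are unchanged. -/
def reflSite {d L : ℕ} (i : Fin d) (m : ℕ) (x : TorusPt d L) : TorusPt d L :=
  Function.update x i (2 * (m : ZMod L) - x i)

/-- Membership in the half-torus `T_L^+ = {x : x_i - m (mod L) ∈ {0,…,L/2}}`. -/
def inPlusSite {d L : ℕ} (i : Fin d) (m : ℕ) (x : TorusPt d L) : Prop :=
  (x i - (m : ZMod L)).val ≤ L / 2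

/-- Membership in the other half-torus `T_L^- = Θ(T_L^+)`. -/
def inMinusSite {d L : ℕ} (i : Fin d) (m : ℕ) (x : TorusPt d L) : Prop :=
  inPlusSite i m (reflSite i m x)

/-- Membership in the fixed-point set `T_L^R = {x : x_i = m or x_i = m + L/2 (mod L)}`. -/
def inFixedSite {d L : ℕ} (i : Fin d) (m : ℕ) (x : TorusPt d L) : Prop :=
  (x i - (m : ZMod L)).val = 0 ∨ (x i - (m : ZMod L)).val = L / 2

instance {d L : ℕ} (i : Fin d) (m : ℕ) : DecidablePred (inPlusSite (d := d) (L := L) i m) :=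
  fun x => by unfold inPlusSite; infer_instance

instance {d L : ℕ} (i : Fin d) (m : ℕ) : DecidablePred (inMinusSite (d := d) (L := L) i m) :=
  fun x => by unfold inMinusSite inPlusSite; infer_instance

instance {d L : ℕ} (i : Fin d) (m : ℕ) : DecidablePred (inFixedSite (d := d) (L := L) i m) :=
  fun x => by unfold inFixedSite; infer_instance

/-- Reflection through sites acting on spin configurations: `(Θφ)_x = φ_{Θ(x)}`. -/
def reflSiteCfg {d L N : ℕ} (i : Fin d) (m : ℕ) (φ : SpinCfg d L N) : SpinCfg d L N :=
  fun x => φ (reflSite i m x)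

/-- The set `H_L` of vertices with all coordinates nonzero, together with the
nonzero points of the cartesian axes. -/
def inHL {d L : ℕ} (x : TorusPt d L) : Prop :=
  (∀ j, x j ≠ 0) ∨ ∃ i, x i ≠ 0 ∧ ∀ j, j ≠ i → x j = 0

/-- `ẑ_i = min(z_i, L - z_i)`, the torus distance of the `i`-th coordinate from `0`. -/
def hatCoord {d L : ℕ} (z : TorusPt d L) (i : Fin d) : ℕ :=
  min (z i).val (L - (z i).val)

/-- The box `Q_z = {x : ∀ i, x_i ≤ ẑ_i or x_i > L - ẑ_i}` with corner `z`. -/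
def inBoxQ {d L : ℕ} (z x : TorusPt d L) : Prop :=
  ∀ i, (x i).val ≤ hatCoord z i ∨ L - hatCoord z i < (x i).val

/-!
Reflection positivity comes from the product structure of the a priori measure: conditionally on
the spins in the fixed planes, the spins in the two open halves of the torus are independent copies
of each other, so for `F` depending on `T⁺` only, `∫ F · (F ∘ Θ)` is an average of squares. For even
`L` every edge lies in one of the closed halves, so `-βH = G + G ∘ Θ` with `G` depending on `T⁺`
only, and reflection positivity passes to the Gibbs state for either sign of `β`.

Write `1_A = u + v`, where `u` and `v` live on `T⁺` and `T⁻` and points of the fixed planes are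
shared half and half. Then `1_{A⁺} = u + Θu` and `1_{A⁻} = v + Θv`, and for a `Θ`-invariant form `B`
`B(u + Θu, u + Θu) + B(v + Θv, v + Θv) = 2 (B(u + v, u + v) + B(u - Θv, Θ(u - Θv)))`.
The function `u - Θv` lives on `T⁺` and vanishes on the fixed planes, so that the last term is
nonnegative by reflection positivity and does not see the diagonal.
-/

section Symmetrization

/-- A reflection through sites of a vertex set `V`: an involution `θ` together with a half `P` of
`V` such that `P` and its mirror image cover `V` and meet only in fixed points of `θ`. -/
structure IsSiteReflection {V : Type*} (θ : V → V) (P : V → Prop) : Prop where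
  involutive : Function.Involutive θ
  mem_or_mem : ∀ x, P x ∨ P (θ x)
  map_eq_self : ∀ x, P x → P (θ x) → θ x = x

/-- The weight that shares each point of `V` equally among those of the half `P` and its mirror
image to which it belongs: `1/2` on the overlap, `1` on the rest of `P`, `0` elsewhere. It is used
both for points and, with `Prod.map θ θ`, for pairs of points. -/
noncomputable def halfWeight {V : Type*} (θ : V → V) (P : V → Prop) (x : V) : ℝ :=
  open Classical in if P x then if P (θ x) then 1 / 2 else 1 else 0

/-- The set `A⁺ = (A ∩ P) ∪ θ(A ∩ P)`: the part of `A` in the half `P` together with its mirror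
image. -/
def symmetrize {V : Type*} [DecidableEq V] (θ : V → V) (P : V → Prop) [DecidablePred P]
    (A : Finset V) : Finset V :=
  A.filter P ∪ (A.filter P).image θ

variable {V : Type*} {θ : V → V} {P : V → Prop}

theorem halfWeight_of_not {x : V} (hx : ¬P x) : halfWeight θ P x = 0 := if_neg hx

theorem halfWeight_reflected_half (x : V) :
    halfWeight θ (fun y => P (θ y)) x = halfWeight θ P (θ x) := rfl

theorem halfWeight_add_halfWeight_reflected (hθ : Function.Involutive θ) {x : V}
    (hx : P x ∨ P (θ x)) : halfWeight θ P x + halfWeight θ P (θ x) = 1 := by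
  have hP : P (θ (θ x)) ↔ P x := by rw [hθ x]
  unfold halfWeight
  split_ifs <;> first | tauto | norm_num

theorem sum_halfWeight_mul_add_sum_halfWeight_mul [Fintype V] (hθ : Function.Involutive θ)
    (f : V → ℝ) (hf : ∀ x, f x ≠ 0 → P x ∨ P (θ x)) :
    ∑ x, halfWeight θ P x * f x + ∑ x, halfWeight θ P x * f (θ x) = ∑ x, f x := by
  have reindex : ∑ x, halfWeight θ P x * f (θ x) = ∑ x, halfWeight θ P (θ x) * f x := by
    rw [← Equiv.sum_comp hθ.toPerm]
    simp only [Function.Involutive.coe_toPerm, hθ _]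
  rw [reindex, ← Finset.sum_add_distrib]
  refine Finset.sum_congr rfl fun x _ => ?_
  by_cases hx : f x = 0
  · simp [hx]
  · rw [← add_mul, halfWeight_add_halfWeight_reflected hθ (hf x hx), one_mul]

theorem mem_symmetrize [DecidableEq V] [DecidablePred P] (hθ : Function.Involutive θ)
    {A : Finset V} {x : V} : x ∈ symmetrize θ P A ↔ (x ∈ A ∧ P x) ∨ (θ x ∈ A ∧ P (θ x)) := by
  have mem_image (s : Finset V) : x ∈ s.image θ ↔ θ x ∈ s := by
    rw [Finset.mem_image]
    exact ⟨by rintro ⟨y, hy, rfl⟩; rwa [hθ y], fun hx => ⟨θ x, hx, hθ x⟩⟩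
  simp only [symmetrize, Finset.mem_union, mem_image, Finset.mem_filter]

theorem sum_sum_eq_toLinearMap₂'_indicator [Fintype V] [DecidableEq V] (K : V → V → ℝ)
    (A : Finset V) :
    ∑ x ∈ A, ∑ y ∈ A, K x y = Matrix.toLinearMap₂' ℝ (Matrix.of K)
      ((A : Set V).indicator (1 : V → ℝ)) ((A : Set V).indicator (1 : V → ℝ)) := by
  simp [Matrix.toLinearMap₂'_apply, Set.indicator_apply]

theorem toLinearMap₂'_funLeft_funLeft [Fintype V] [DecidableEq V] (hθ : Function.Involutive θ)
    {K : V → V → ℝ} (hK : ∀ x y, K (θ x) (θ y) = K x y) (a b : V → ℝ) :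
    Matrix.toLinearMap₂' ℝ (Matrix.of K) (LinearMap.funLeft ℝ ℝ θ a) (LinearMap.funLeft ℝ ℝ θ b) =
      Matrix.toLinearMap₂' ℝ (Matrix.of K) a b := by
  simp only [Matrix.toLinearMap₂'_apply, LinearMap.funLeft_apply, Matrix.of_apply]
  rw [← Equiv.sum_comp hθ.toPerm]
  refine Finset.sum_congr rfl fun x _ => ?_
  rw [← Equiv.sum_comp hθ.toPerm]
  simp only [Function.Involutive.coe_toPerm, hθ _, hK]

theorem polarization_of_involutive_isometry {R E : Type*} [CommRing R] [AddCommGroup E] [Module R E]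
    (B : LinearMap.BilinForm R E) (Θ : E →ₗ[R] E) (hΘ : Function.Involutive Θ)
    (hB : ∀ u v, B (Θ u) (Θ v) = B u v) (u v : E) :
    B (u + Θ u) (u + Θ u) + B (v + Θ v) (v + Θ v) =
      2 * (B (u + v) (u + v) + B (u - Θ v) (Θ (u - Θ v))) := by
  have hswap (a b : E) : B (Θ a) b = B a (Θ b) := by rw [← hB, hΘ]
  simp only [map_add, map_sub, LinearMap.add_apply, LinearMap.sub_apply, hΘ v, hB, hswap]
  ring

namespace IsSiteReflection

theorem reflected_half (h : IsSiteReflection θ P) : IsSiteReflection θ fun x => P (θ x) where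
  involutive := h.involutive
  mem_or_mem x := h.mem_or_mem (θ x)
  map_eq_self x hx hx' := h.map_eq_self x (by rwa [h.involutive x] at hx') hx

theorem indicator_symmetrize [DecidableEq V] [DecidablePred P] (h : IsSiteReflection θ P)
    (A : Finset V) (x : V) :
    (symmetrize θ P A : Set V).indicator (1 : V → ℝ) x =
      halfWeight θ P x * (A : Set V).indicator 1 x +
        halfWeight θ P (θ x) * (A : Set V).indicator 1 (θ x) := by
  have hfix := h.map_eq_self x
  simp only [Set.indicator_apply, Finset.mem_coe, mem_symmetrize h.involutive, halfWeight,
    h.involutive x, Pi.one_apply]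
  by_cases h₁ : P x <;> by_cases h₂ : P (θ x)
  · rw [hfix h₁ h₂]
    by_cases hA : x ∈ A <;> simp [h₁, hA]
    norm_num
  all_goals simp [h₁, h₂]

theorem sum_sum_le_half_sum_sum_symmetrize [Fintype V] [DecidableEq V] [DecidablePred P]
    [DecidablePred fun x => P (θ x)] (h : IsSiteReflection θ P) (K : V → V → ℝ)
    (hK : ∀ x y, K (θ x) (θ y) = K x y)
    (hpos : ∀ a : V → ℝ, (∀ x, P (θ x) → a x = 0) → 0 ≤ ∑ x, ∑ y, a x * a (θ y) * K x y)
    (A : Finset V) :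
    ∑ x ∈ A, ∑ y ∈ A, K x y ≤ 1 / 2 *
      ((∑ x ∈ symmetrize θ P A, ∑ y ∈ symmetrize θ P A, K x y) +
        ∑ x ∈ symmetrize θ (fun z => P (θ z)) A,
          ∑ y ∈ symmetrize θ (fun z => P (θ z)) A, K x y) := by
  let B : LinearMap.BilinForm ℝ (V → ℝ) := Matrix.toLinearMap₂' ℝ (Matrix.of K)
  let Θ : (V → ℝ) →ₗ[ℝ] (V → ℝ) := LinearMap.funLeft ℝ ℝ θ
  let a : V → ℝ := (A : Set V).indicator 1
  let u : V → ℝ := halfWeight θ P * a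
  let v : V → ℝ := halfWeight θ (fun x => P (θ x)) * a
  have hΘ : Function.Involutive Θ := fun b => by
    ext x
    simp [Θ, h.involutive x]
  have ha : (A : Set V).indicator 1 = u + v := by
    ext x
    simp [u, v, a, halfWeight_reflected_half, ← add_mul,
      halfWeight_add_halfWeight_reflected h.involutive (h.mem_or_mem x)]
  have ha_plus : (symmetrize θ P A : Set V).indicator 1 = u + Θ u :=
    funext (h.indicator_symmetrize A)
  have ha_minus : (symmetrize θ (fun z => P (θ z)) A : Set V).indicator 1 = v + Θ v :=
    funext (h.reflected_half.indicator_symmetrize A)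
  have hnonneg : 0 ≤ B (u - Θ v) (Θ (u - Θ v)) := by
    refine (hpos (u - Θ v) fun x hx => ?_).trans_eq ?_
    · by_cases hPx : P x
      · simp [u, v, a, Θ, halfWeight_reflected_half, h.map_eq_self x hPx hx]
      · simp [u, v, Θ, halfWeight_reflected_half, h.involutive x, halfWeight_of_not hPx]
    · simp only [B, Θ, Matrix.toLinearMap₂'_apply, Matrix.of_apply, LinearMap.funLeft_apply,
        smul_eq_mul, mul_assoc]
  have key := polarization_of_involutive_isometry B Θ hΘ
    (toLinearMap₂'_funLeft_funLeft h.involutive hK) u v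
  simp only [sum_sum_eq_toLinearMap₂'_indicator, ha, ha_plus, ha_minus]
  linarith

theorem sum_sum_mul_reflected_ite_ne [Fintype V] [DecidableEq V] (h : IsSiteReflection θ P)
    (K : V → V → ℝ) {a : V → ℝ} (ha : ∀ x, P (θ x) → a x = 0) :
    (∑ x, ∑ y, a x * a (θ y) * if x ≠ y then K x y else 0) =
      ∑ x, ∑ y, a x * a (θ y) * K x y := by
  have hdiag (x : V) : a x * a (θ x) = 0 := by
    rcases h.reflected_half.mem_or_mem x with hx | hx
    · rw [ha x hx, zero_mul]
    · rw [ha (θ x) hx, mul_zero]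
  refine Finset.sum_congr rfl fun x _ => Finset.sum_congr rfl fun y _ => ?_
  obtain rfl | hxy := eq_or_ne x y
  · rw [hdiag, zero_mul, zero_mul]
  · rw [if_pos hxy]

end IsSiteReflection

end Symmetrization

section ProductMeasure

variable {V W S : Type*} [Fintype V] [Fintype W] [MeasurableSpace S]

theorem measurePreserving_comp_of_injective (μ : Measure S) [IsProbabilityMeasure μ] {e : V → W}
    (he : Function.Injective e) :
    MeasurePreserving (fun ω : W → S => ω ∘ e)
      (Measure.pi fun _ : W => μ) (Measure.pi fun _ : V => μ) := by
  have hindep := (ProbabilityTheory.iIndepFun_pi (μ := fun _ : W => μ) (X := fun _ s => s)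
    fun _ => aemeasurable_id).precomp he
  refine ⟨by fun_prop, (hindep.map_fun_eq_pi_map fun x => ?_).trans ?_⟩
  · exact (measurable_pi_apply (e x)).aemeasurable
  · congr with x : 1
    exact (measurePreserving_eval (fun _ : W => μ) (e x)).map_eq

theorem measurePreserving_sumElim (μ : Measure S) [SigmaFinite μ] :
    MeasurePreserving (fun w : (V → S) × (W → S) => Sum.elim w.1 w.2)
      ((Measure.pi fun _ : V => μ).prod (Measure.pi fun _ : W => μ))
      (Measure.pi fun _ : V ⊕ W => μ) := by
  convert measurePreserving_sumPiEquivProdPi_symm fun _ : V ⊕ W => μ using 1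
  ext w (x | x) <;> rfl

end ProductMeasure

section ReflectionPositivity

open Classical in
/-- The copy of `V` among three from which `glueCfg` reads the spin at a point: the first one on the
fixed points of `θ`, the second one on the rest of the half `P`, and elsewhere the third one, at
the mirror image of the point. -/
noncomputable def gluePosition {V : Type*} (θ : V → V) (P : V → Prop) (x : V) : V ⊕ V ⊕ V :=
  if θ x = x then .inl x else if P x then .inr (.inl x) else .inr (.inr (θ x))

/-- The configuration equal to `r` on the fixed points of `θ`, to `p` on the rest of the half `P`,
and to the mirror image of `q` elsewhere. -/
noncomputable def glueCfg {V S : Type*} (θ : V → V) (P : V → Prop) (r p q : V → S) : V → S :=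
  Sum.elim r (Sum.elim p q) ∘ gluePosition θ P

variable {V S : Type*} {θ : V → V} {P : V → Prop}

theorem gluePosition_injective (hθ : Function.Injective θ) :
    Function.Injective (gluePosition θ P) := by
  intro x y hxy
  unfold gluePosition at hxy
  split_ifs at hxy <;> simp_all [hθ.eq_iff]

theorem measurePreserving_glueCfg [Fintype V] [MeasurableSpace S] (μ : Measure S)
    [IsProbabilityMeasure μ] (hθ : Function.Injective θ) :
    MeasurePreserving (fun w : (V → S) × (V → S) × (V → S) => glueCfg θ P w.1 w.2.1 w.2.2)
      ((Measure.pi fun _ : V => μ).prod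
        ((Measure.pi fun _ : V => μ).prod (Measure.pi fun _ : V => μ)))
      (Measure.pi fun _ : V => μ) :=
  (measurePreserving_comp_of_injective μ (gluePosition_injective hθ)).comp <|
    (measurePreserving_sumElim μ).comp <|
      (MeasurePreserving.id _).prod (measurePreserving_sumElim μ)

theorem apply_glueCfg_of_dependsOn {F : (V → S) → ℝ} (hF : DependsOn F {x | P x})
    (r p q : V → S) :
    F (glueCfg θ P r p q) = F (glueCfg θ P r p p) := by
  refine hF fun x hx => ?_
  have hx : P x := hx
  by_cases hfix : θ x = x <;> simp [glueCfg, gluePosition, hfix, hx]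

namespace IsSiteReflection

theorem apply_glueCfg_comp_of_dependsOn (h : IsSiteReflection θ P) {F : (V → S) → ℝ}
    (hF : DependsOn F {x | P x}) (r p q : V → S) :
    F (glueCfg θ P r p q ∘ θ) = F (glueCfg θ P r q q) := by
  refine hF fun x hx => ?_
  by_cases hfix : θ x = x
  · simp [glueCfg, gluePosition, hfix]
  · have hx' : ¬P (θ x) := fun hx' => hfix (h.map_eq_self x hx hx')
    have hx : P x := hx
    simp [glueCfg, gluePosition, h.involutive x, hfix, Ne.symm hfix, hx, hx']

theorem integral_mul_comp_nonneg [Fintype V] [MeasurableSpace S] (μ : Measure S)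
    [IsProbabilityMeasure μ] (h : IsSiteReflection θ P) {F : (V → S) → ℝ}
    (hF : DependsOn F {x | P x})
    (hint : Integrable (fun φ => F φ * F (φ ∘ θ)) (Measure.pi fun _ : V => μ)) :
    0 ≤ ∫ φ, F φ * F (φ ∘ θ) ∂(Measure.pi fun _ : V => μ) := by
  have hglue := measurePreserving_glueCfg (P := P) μ h.involutive.injective
  have hint_glue := hglue.integrable_comp_of_integrable hint
  rw [← hglue.map_eq] at hint ⊢
  rw [integral_map hglue.aemeasurable hint.aestronglyMeasurable]
  refine (integral_nonneg fun r => ?_).trans_eq (integral_prod _ hint_glue).symm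
  calc (0 : ℝ)
    _ ≤ (∫ p, F (glueCfg θ P r p p) ∂(Measure.pi fun _ => μ)) *
          ∫ q, F (glueCfg θ P r q q) ∂(Measure.pi fun _ => μ) := mul_self_nonneg _
    _ = ∫ w, F (glueCfg θ P r w.1 w.1) * F (glueCfg θ P r w.2 w.2)
          ∂((Measure.pi fun _ => μ).prod (Measure.pi fun _ => μ)) := (integral_prod_mul _ _).symm
    _ = ∫ w, F (glueCfg θ P r w.1 w.2) * F (glueCfg θ P r w.1 w.2 ∘ θ)
          ∂((Measure.pi fun _ => μ).prod (Measure.pi fun _ => μ)) := by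
      simp_rw [fun p q => apply_glueCfg_of_dependsOn (θ := θ) hF r p q,
        h.apply_glueCfg_comp_of_dependsOn hF r]

end IsSiteReflection

end ReflectionPositivity

section Torus

variable {d L : ℕ}

theorem reflSite_involutive (i : Fin d) (m : ℕ) :
    Function.Involutive (reflSite (L := L) i m) := fun x => by
  simp [reflSite]

theorem reflSite_apply_sub (i : Fin d) (m : ℕ) (x : TorusPt d L) :
    reflSite i m x i - (m : ZMod L) = -(x i - (m : ZMod L)) := by
  simp only [reflSite, Function.update_self]
  ring

theorem reflSite_eq_self_iff {i : Fin d} {m : ℕ} {x : TorusPt d L} :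
    reflSite i m x = x ↔ -(x i - (m : ZMod L)) = x i - (m : ZMod L) := by
  rw [← reflSite_apply_sub, sub_left_inj, reflSite, Function.update_eq_self_iff,
    Function.update_self]

theorem torusAdj_iff {x y : TorusPt d L} :
    torusAdj x y ↔ ∃ j, (y j = x j + 1 ∨ y j = x j - 1) ∧ ∀ k ≠ j, y k = x k := by
  simp only [torusAdj, Function.eq_update_iff, ← or_and_right]

theorem torusAdj.reflSite {x y : TorusPt d L} (h : torusAdj x y) (i : Fin d) (m : ℕ) :
    torusAdj (reflSite i m x) (reflSite i m y) := by
  obtain ⟨j, hj, hne⟩ := torusAdj_iff.1 h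
  refine torusAdj_iff.2 ⟨j, ?_, fun k hk => ?_⟩
  · obtain rfl | hji := eq_or_ne j i
    · simp only [_root_.reflSite, Function.update_self]
      rcases hj with hj | hj
      · exact .inr (by rw [hj]; ring)
      · exact .inl (by rw [hj]; ring)
    · simpa only [_root_.reflSite, Function.update_of_ne hji] using hj
  · obtain rfl | hki := eq_or_ne k i
    · simp only [_root_.reflSite, Function.update_self, hne k hk]
    · simpa only [_root_.reflSite, Function.update_of_ne hki] using hne k hk

theorem torusAdj_reflSite_iff {i : Fin d} {m : ℕ} {x y : TorusPt d L} :
    torusAdj (reflSite i m x) (reflSite i m y) ↔ torusAdj x y := by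
  refine ⟨fun h => ?_, fun h => h.reflSite i m⟩
  simpa only [reflSite_involutive i m _] using h.reflSite i m

variable [NeZero L]

theorem isSiteReflection_reflSite (i : Fin d) (m : ℕ) :
    IsSiteReflection (reflSite (L := L) i m) (inPlusSite i m) where
  involutive := reflSite_involutive i m
  mem_or_mem x := by
    have := ZMod.val_lt (x i - (m : ZMod L))
    rw [inPlusSite, inPlusSite, reflSite_apply_sub, ZMod.neg_val]
    split_ifs <;> omega
  map_eq_self x hx hx' := by
    rw [inPlusSite] at hx hx'
    rw [reflSite_apply_sub] at hx'
    refine reflSite_eq_self_iff.2 (ZMod.val_injective L ?_)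
    rw [ZMod.neg_val] at hx' ⊢
    split_ifs at hx' ⊢ with hzero
    · simp [hzero]
    · omega

theorem val_add_one_le_half_or_neg (hL : Even L) (z : ZMod L) :
    (z.val ≤ L / 2 ∧ (z + 1).val ≤ L / 2) ∨ ((-z).val ≤ L / 2 ∧ (-(z + 1)).val ≤ L / 2) := by
  have hL_pos := NeZero.pos L
  have hL_two := hL.two_dvd
  have hone : (1 : ZMod L).val = 1 := ZMod.val_one'' (by omega)
  obtain hz | hz := lt_or_ge z.val (L / 2)
  · have hsucc : (z + 1).val = z.val + 1 := by rw [ZMod.val_add_of_lt] <;> omega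
    omega
  · have hz_ne : z ≠ 0 := by
      rintro rfl
      simp only [ZMod.val_zero] at hz
      omega
    have hneg : (-z).val = L - z.val := by rw [ZMod.neg_val, if_neg hz_ne]
    have hz_lt := z.val_lt
    have hpred : (-(z + 1)).val = (-z).val - 1 := by
      rw [neg_add', ZMod.val_sub (by omega), hone]
    omega

theorem torusAdj.inPlusSite_or_inMinusSite (hL : Even L) {x y : TorusPt d L} (h : torusAdj x y)
    (i : Fin d) (m : ℕ) :
    (inPlusSite i m x ∧ inPlusSite i m y) ∨ (inMinusSite i m x ∧ inMinusSite i m y) := by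
  obtain ⟨j, hj, hne⟩ := torusAdj_iff.1 h
  simp only [inMinusSite, inPlusSite, reflSite_apply_sub]
  obtain rfl | hji := eq_or_ne j i
  · rcases hj with hj | hj
    · have := val_add_one_le_half_or_neg hL (x j - (m : ZMod L))
      rwa [sub_add_eq_add_sub, ← hj] at this
    · have := val_add_one_le_half_or_neg hL (y j - (m : ZMod L))
      rw [sub_add_eq_add_sub, hj, sub_add_cancel, ← hj] at this
      tauto
  · rw [hne i hji.symm]
    have := (isSiteReflection_reflSite i m).mem_or_mem x
    simpa only [and_self, inPlusSite, reflSite_apply_sub] using this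

end Torus

section Energy

variable {d L N : ℕ}

/-- The contribution `φ_x · φ_y` of a pair `e = (x, y)` to the Hamiltonian, zero unless `e` is an
edge. -/
noncomputable def bondProduct (φ : SpinCfg d L N) (e : TorusPt d L × TorusPt d L) : ℝ :=
  if torusAdj e.1 e.2 then
    ⟪(φ e.1 : EuclideanSpace ℝ (Fin N)), (φ e.2 : EuclideanSpace ℝ (Fin N))⟫
  else 0

/-- The part of `-H` carried by the half-torus `T_L^+`, to which edges inside the fixed planes
contribute half of their weight. -/
noncomputable def halfEnergy [NeZero L] (i : Fin d) (m : ℕ) (φ : SpinCfg d L N) : ℝ :=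
  1 / 2 * ∑ e : TorusPt d L × TorusPt d L,
    halfWeight (Prod.map (reflSite i m) (reflSite i m))
      (fun e => inPlusSite i m e.1 ∧ inPlusSite i m e.2) e * bondProduct φ e

theorem continuous_bondProduct (e : TorusPt d L × TorusPt d L) :
    Continuous fun φ : SpinCfg d L N => bondProduct φ e := by
  unfold bondProduct
  split_ifs <;> fun_prop

theorem continuous_reflSiteCfg (i : Fin d) (m : ℕ) :
    Continuous (reflSiteCfg (L := L) (N := N) i m) :=
  continuous_pi fun x => continuous_apply (reflSite i m x)

theorem bondProduct_reflSiteCfg (i : Fin d) (m : ℕ) (φ : SpinCfg d L N)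
    (e : TorusPt d L × TorusPt d L) :
    bondProduct (reflSiteCfg i m φ) e =
      bondProduct φ (Prod.map (reflSite i m) (reflSite i m) e) := by
  simp only [bondProduct, reflSiteCfg, Prod.map, torusAdj_reflSite_iff]

variable [NeZero L]

theorem hamiltonian_eq_sum_bondProduct (φ : SpinCfg d L N) :
    hamiltonian φ = -(1 / 2) * ∑ e, bondProduct φ e := by
  simp only [hamiltonian, bondProduct, Fintype.sum_prod_type]

theorem continuous_hamiltonian : Continuous (hamiltonian (d := d) (L := L) (N := N)) := by
  simp only [funext hamiltonian_eq_sum_bondProduct]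
  exact continuous_const.mul (continuous_finsetSum _ fun e _ => continuous_bondProduct e)

theorem continuous_halfEnergy (i : Fin d) (m : ℕ) :
    Continuous (halfEnergy (L := L) (N := N) i m) :=
  continuous_const.mul <| continuous_finsetSum _ fun e _ =>
    continuous_const.mul (continuous_bondProduct e)

theorem dependsOn_halfEnergy (i : Fin d) (m : ℕ) :
    DependsOn (halfEnergy (L := L) (N := N) i m) {x | inPlusSite i m x} := by
  intro φ ψ h
  unfold halfEnergy
  congr 1
  refine Finset.sum_congr rfl fun e _ => ?_
  by_cases he : inPlusSite i m e.1 ∧ inPlusSite i m e.2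
  · rw [bondProduct, bondProduct, h e.1 he.1, h e.2 he.2]
  · have hweight := halfWeight_of_not (θ := Prod.map (reflSite i m) (reflSite i m))
      (P := fun e : TorusPt d L × TorusPt d L => inPlusSite i m e.1 ∧ inPlusSite i m e.2) he
    rw [hweight, zero_mul, zero_mul]

theorem neg_hamiltonian_eq_halfEnergy_add (hL : Even L) (i : Fin d) (m : ℕ)
    (φ : SpinCfg d L N) :
    -hamiltonian φ = halfEnergy i m φ + halfEnergy i m (reflSiteCfg i m φ) := by
  have hinv := (reflSite_involutive (L := L) i m).prodMap (reflSite_involutive (L := L) i m)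
  have hcover (e : TorusPt d L × TorusPt d L) (he : bondProduct φ e ≠ 0) :=
    (ite_ne_right_iff.1 he).1.inPlusSite_or_inMinusSite hL i m
  simp only [hamiltonian_eq_sum_bondProduct, halfEnergy, bondProduct_reflSiteCfg, ← mul_add,
    sum_halfWeight_mul_add_sum_halfWeight_mul hinv (bondProduct φ) hcover]
  ring

theorem hamiltonian_reflSiteCfg (i : Fin d) (m : ℕ) (φ : SpinCfg d L N) :
    hamiltonian (reflSiteCfg i m φ) = hamiltonian φ := by
  have hinv := (reflSite_involutive (L := L) i m).prodMap (reflSite_involutive (L := L) i m)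
  simp only [hamiltonian_eq_sum_bondProduct, bondProduct_reflSiteCfg]
  rw [← Equiv.sum_comp hinv.toPerm (bondProduct φ), Function.Involutive.coe_toPerm]

end Energy

section Gibbs

variable {d L N : ℕ} [NeZero L]

theorem gibbsExp_const_mul (β c : ℝ) (f : SpinCfg d L N → ℝ) :
    gibbsExp d L N β (fun φ => c * f φ) = c * gibbsExp d L N β f := by
  simp only [gibbsExp, mul_assoc, integral_const_mul]
  ring

variable [NeZero N]

instance isProbabilityMeasure_sphereUniform_s4 : IsProbabilityMeasure (sphereUniform N) :=
  have : NeZero (volume : Measure (EuclideanSpace ℝ (Fin N))).toSphere :=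
    ⟨Measure.toSphere_ne_zero _⟩
  isProbabilityMeasureSMul

instance isProbabilityMeasure_spinMeasure : IsProbabilityMeasure (spinMeasure d L N) :=
  inferInstanceAs (IsProbabilityMeasure (Measure.pi _))

theorem measurePreserving_reflSiteCfg (i : Fin d) (m : ℕ) :
    MeasurePreserving (reflSiteCfg i m) (spinMeasure d L N) (spinMeasure d L N) :=
  measurePreserving_comp_of_injective (sphereUniform N) (reflSite_involutive i m).injective

theorem integrable_spinMeasure_of_continuous {f : SpinCfg d L N → ℝ} (hf : Continuous f) :
    Integrable f (spinMeasure d L N) :=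
  hf.integrable_of_hasCompactSupport (.of_compactSpace f)

theorem integrable_mul_exp_hamiltonian (β : ℝ) {f : SpinCfg d L N → ℝ} (hf : Continuous f) :
    Integrable (fun φ => f φ * Real.exp (-β * hamiltonian φ)) (spinMeasure d L N) :=
  integrable_spinMeasure_of_continuous <|
    hf.mul (Real.continuous_exp.comp (continuous_const.mul continuous_hamiltonian))

theorem gibbsExp_sum (β : ℝ) {ι : Type*} (s : Finset ι) {f : ι → SpinCfg d L N → ℝ}
    (hf : ∀ k ∈ s, Continuous (f k)) :
    gibbsExp d L N β (fun φ => ∑ k ∈ s, f k φ) = ∑ k ∈ s, gibbsExp d L N β (f k) := by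
  simp only [gibbsExp, Finset.sum_mul, Finset.mul_sum,
    integral_finsetSum s fun k hk => integrable_mul_exp_hamiltonian β (hf k hk)]

theorem gibbsExp_comp_reflSiteCfg (β : ℝ) (i : Fin d) (m : ℕ) (f : SpinCfg d L N → ℝ) :
    gibbsExp d L N β (fun φ => f (reflSiteCfg i m φ)) = gibbsExp d L N β f := by
  have hinv : Function.Involutive (reflSiteCfg (L := L) (N := N) i m) := fun φ =>
    funext fun x => congrArg φ (reflSite_involutive i m x)
  have hmp := measurePreserving_reflSiteCfg (d := d) (L := L) (N := N) i m
  have hint := hmp.integral_comp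
    (MeasurableEquiv.ofInvolutive _ hinv hmp.measurable).measurableEmbedding
    fun φ => f φ * Real.exp (-β * hamiltonian φ)
  simp only [hamiltonian_reflSiteCfg] at hint
  rw [gibbsExp, gibbsExp, hint]

theorem gibbsExp_mul_reflSiteCfg_nonneg (hL : Even L) (β : ℝ) (i : Fin d) (m : ℕ)
    {F : SpinCfg d L N → ℝ} (hF : Continuous F) (hdep : DependsOn F {x | inPlusSite i m x}) :
    0 ≤ gibbsExp d L N β fun φ => F φ * F (reflSiteCfg i m φ) := by
  let G : SpinCfg d L N → ℝ := fun φ => F φ * Real.exp (β * halfEnergy i m φ)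
  have hG : Continuous G :=
    hF.mul (Real.continuous_exp.comp (continuous_const.mul (continuous_halfEnergy i m)))
  have hG_dep : DependsOn G {x | inPlusSite i m x} := fun φ ψ h => by
    simp only [G, hdep h, dependsOn_halfEnergy i m h]
  have hG_nonneg := (isSiteReflection_reflSite i m).integral_mul_comp_nonneg (sphereUniform N)
    hG_dep (integrable_spinMeasure_of_continuous (hG.mul (hG.comp (continuous_reflSiteCfg i m))))
  have hfactor (φ : SpinCfg d L N) :
      F φ * F (reflSiteCfg i m φ) * Real.exp (-β * hamiltonian φ) =
        G φ * G (reflSiteCfg i m φ) := by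
    rw [neg_mul_comm, neg_hamiltonian_eq_halfEnergy_add hL i m, mul_add, Real.exp_add,
      mul_mul_mul_comm]
  unfold gibbsExp
  simp only [hfactor]
  exact mul_nonneg (inv_nonneg.2 (integral_nonneg fun φ => (Real.exp_pos _).le)) hG_nonneg

theorem corrOne_reflSite (β : ℝ) (i : Fin d) (m : ℕ) (x y : TorusPt d L) :
    corrOne d L N β (reflSite i m x) (reflSite i m y) = corrOne d L N β x y :=
  gibbsExp_comp_reflSiteCfg β i m fun φ : SpinCfg d L N =>
    (φ x : EuclideanSpace ℝ (Fin N)) 0 * (φ y : EuclideanSpace ℝ (Fin N)) 0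

theorem gibbsExp_sum_mul_sum (β : ℝ) (a b : TorusPt d L → ℝ) :
    gibbsExp d L N β (fun φ : SpinCfg d L N => (∑ x, a x * (φ x : EuclideanSpace ℝ (Fin N)) 0) *
      ∑ y, b y * (φ y : EuclideanSpace ℝ (Fin N)) 0) =
      ∑ x, ∑ y, a x * b y * corrOne d L N β x y := by
  simp only [Finset.sum_mul_sum, mul_mul_mul_comm _ _ (b _)]
  rw [gibbsExp_sum β _ fun x _ => by fun_prop]
  refine Finset.sum_congr rfl fun x _ => ?_
  rw [gibbsExp_sum β _ fun y _ => by fun_prop]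
  exact Finset.sum_congr rfl fun y _ => gibbsExp_const_mul β _ _

theorem sum_sum_mul_reflected_mul_corrOne_nonneg (hL : Even L) (β : ℝ) (i : Fin d) (m : ℕ)
    {a : TorusPt d L → ℝ} (ha : ∀ x, inMinusSite i m x → a x = 0) :
    0 ≤ ∑ x, ∑ y, a x * a (reflSite i m y) * corrOne d L N β x y := by
  let F : SpinCfg d L N → ℝ := fun φ => ∑ x, a x * (φ x : EuclideanSpace ℝ (Fin N)) 0
  have hF : Continuous F := by fun_prop
  have hF_dep : DependsOn F {x | inPlusSite i m x} := fun φ ψ h => by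
    refine Finset.sum_congr rfl fun x _ => ?_
    rcases (isSiteReflection_reflSite i m).mem_or_mem x with hx | hx
    · rw [h x hx]
    · rw [ha x hx, zero_mul, zero_mul]
  have hF_refl (φ : SpinCfg d L N) : F (reflSiteCfg i m φ) =
      ∑ y, a (reflSite i m y) * (φ y : EuclideanSpace ℝ (Fin N)) 0 := by
    rw [← Equiv.sum_comp (reflSite_involutive i m).toPerm]
    simp only [F, reflSiteCfg, Function.Involutive.coe_toPerm, reflSite_involutive i m _]
  have hF_nonneg := gibbsExp_mul_reflSiteCfg_nonneg hL β i m hF hF_dep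
  simp only [hF_refl] at hF_nonneg
  rwa [gibbsExp_sum_mul_sum] at hF_nonneg

end Gibbs

theorem spin_site_reflection_sum_inequality_general
    (d L N : ℕ) [NeZero L] [NeZero N] (hL : Even L) (β : ℝ) (i : Fin d) (m : ℕ)
    (A : Finset (TorusPt d L)) :
    (∑ x ∈ A, ∑ y ∈ A, if x ≠ y then corrOne d L N β x y else 0) ≤
      (1 / 2) *
        ((∑ x ∈ symmetrize (reflSite i m) (inPlusSite i m) A,
            ∑ y ∈ symmetrize (reflSite i m) (inPlusSite i m) A,
              if x ≠ y then corrOne d L N β x y else 0) +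
          ∑ x ∈ symmetrize (reflSite i m) (inMinusSite i m) A,
            ∑ y ∈ symmetrize (reflSite i m) (inMinusSite i m) A,
              if x ≠ y then corrOne d L N β x y else 0) := by
  refine (isSiteReflection_reflSite i m).sum_sum_le_half_sum_sum_symmetrize
    (fun x y => if x ≠ y then corrOne d L N β x y else 0) (fun x y => ?_) (fun a ha => ?_) A
  · simp only [corrOne_reflSite, (reflSite_involutive i m).injective.ne_iff]
  · rw [(isSiteReflection_reflSite i m).sum_sum_mul_reflected_ite_ne (corrOne d L N β) ha]
    exact sum_sum_mul_reflected_mul_corrOne_nonneg hL β i m ha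

/-- **Reflection-positivity inequality for sums of two-point functions (sites).**
For a reflection `Θ` through sites and `A ⊆ T_L`, with
`A^± = (A ∩ T_L^±) ∪ Θ(A ∩ T_L^±)`, the sum of `⟨φ_x^1 φ_y^1⟩` over ordered pairs of
distinct vertices of `A` is at most the half-sum of the corresponding sums over `A^+`
and over `A^-`. -/
theorem spin_site_reflection_sum_inequality
    (d L N : ℕ) [NeZero L] [NeZero N] (hd : 2 ≤ d) (hL : Even L)
    (β : ℝ) (hβ : 0 ≤ β) (i : Fin d) (m : ℕ) (hm : m < L)
    (A : Finset (TorusPt d L)) :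
    (∑ x ∈ A, ∑ y ∈ A, if x ≠ y then corrOne d L N β x y else 0) ≤
      (1 / 2) *
        ((∑ x ∈ (A.filter (inPlusSite i m) ∪ (A.filter (inPlusSite i m)).image (reflSite i m)),
            ∑ y ∈ (A.filter (inPlusSite i m) ∪ (A.filter (inPlusSite i m)).image (reflSite i m)),
              if x ≠ y then corrOne d L N β x y else 0) +
          (∑ x ∈ (A.filter (inMinusSite i m) ∪ (A.filter (inMinusSite i m)).image (reflSite i m)),
            ∑ y ∈ (A.filter (inMinusSite i m) ∪ (A.filter (inMinusSite i m)).image (reflSite i m)),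
              if x ≠ y then corrOne d L N β x y else 0)) :=
  spin_site_reflection_sum_inequality_general d L N hL β i m A
end

section
/- Let z = (z_1,…,z_d) ∈ T_L and i ∈ {1,…,d} be such that z_i is even and nonzero. Then 2 |Ω^{dim}({o, z})| ≤ |Ω^{dim}({o, (z_i − 1) e_i})| + |Ω^{dim}({o, (z_i + 1) e_i})|. -/
/-- The number `|Ω^{dim}(A)|` of dimer covers (perfect matchings) of the torus with the
vertices of `A` (and all edges incident to them) removed.  A dimer cover is encoded as
the involution `f` matching each remaining vertex to its partner. -/
noncomputable def dimerCount (d L : ℕ) (A : Finset (TorusPt d L)) : ℕ :=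
  Nat.card {f : TorusPt d L → TorusPt d L //
    (∀ x ∈ A, f x = x) ∧
      ∀ x, x ∉ A → f x ∉ A ∧ f x ≠ x ∧ torusAdj x (f x) ∧ f (f x) = x}

/-!
A reflection `θ` through a plane that bisects edges cuts the torus into a half `H` and its mirror
image, and an edge crossing the plane joins a vertex to its own mirror image. A dimer cover `f` is
therefore determined by its restrictions to the two halves, which interact only through the set of
bonds `{x, θ x}` occupied by `f`. Given two covers with the same occupied crossing bonds, one may
exchange a half of one for the mirror image of a half of the other. Two covers avoiding `a ∈ H` and
`θ b ∉ H` become in this way a cover avoiding `a, θ a` and one avoiding `b, θ b`, which gives the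
Cauchy–Schwarz inequality `N(a, θ b)² ≤ N(a, θ a) * N(b, θ b)`. On the torus, translation invariance
turns this into log-convexity of the counts along a coordinate axis, and the geometric mean is at
most the arithmetic mean.
-/

theorem sq_card_le_card_mul_card_of_fiberwise {α β γ σ : Type*} [Finite α] [Finite β] [Finite γ]
    [Finite σ] (u : α → σ) (v : β → σ) (w : γ → σ)
    (h : ∀ s, Nat.card {x // u x = s} ^ 2 ≤ Nat.card {y // v y = s} * Nat.card {z // w z = s}) :
    Nat.card α ^ 2 ≤ Nat.card β * Nat.card γ := by
  have := Fintype.ofFinite σ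
  rw [← Nat.card_congr (Equiv.sigmaFiberEquiv u), ← Nat.card_congr (Equiv.sigmaFiberEquiv v),
    ← Nat.card_congr (Equiv.sigmaFiberEquiv w), Nat.card_sigma, Nat.card_sigma, Nat.card_sigma]
  exact Finset.sum_sq_le_sum_mul_sum_of_sq_le_mul _ (fun _ _ ↦ Nat.zero_le _)
    (fun _ _ ↦ Nat.zero_le _) fun s _ ↦ h s

theorem piecewise_eq_piecewise_iff {α β : Type*} (s : Set α) [DecidablePred (· ∈ s)]
    {f f' g g' : α → β} :
    s.piecewise f g = s.piecewise f' g' ↔ Set.EqOn f f' s ∧ Set.EqOn g g' sᶜ where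
  mp h :=
    ⟨(s.piecewise_eqOn f g).symm.trans (h ▸ s.piecewise_eqOn f' g'),
      (s.piecewise_eqOn_compl f g).symm.trans (h ▸ s.piecewise_eqOn_compl f' g')⟩
  mpr h := by
    ext x
    by_cases hx : x ∈ s
    · simpa [hx] using h.1 hx
    · simpa [hx] using h.2 hx

section DimerCover

variable {V W : Type*} {r : V → V → Prop} {s : W → W → Prop} {A B : Set V} {f g : V → V}

/-- `f` is a dimer cover of the graph with adjacency relation `r` after removal of the vertices
in `A`, encoded as the involution that exchanges the endpoints of each dimer and fixes `A`. -/
structure IsDimerCover (r : V → V → Prop) (A : Set V) (f : V → V) : Prop where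
  involutive : Function.Involutive f
  apply_eq_self_iff : ∀ x, f x = x ↔ x ∈ A
  adj : ∀ x ∉ A, r x (f x)

/-- The number of dimer covers of the graph with adjacency relation `r` and the vertices of `A`
removed; it is only meaningful on a finite vertex set, being `0` if there are infinitely many
covers. -/
noncomputable def numDimerCovers (r : V → V → Prop) (A : Set V) : ℕ :=
  Nat.card {f // IsDimerCover r A f}

theorem IsDimerCover.apply_mem_iff (hf : IsDimerCover r A f) {x : V} : f x ∈ A ↔ x ∈ A := by
  rw [← hf.apply_eq_self_iff, ← hf.apply_eq_self_iff, hf.involutive, eq_comm]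

theorem isDimerCover_iff : IsDimerCover r A f ↔
    (∀ x ∈ A, f x = x) ∧ ∀ x, x ∉ A → f x ∉ A ∧ f x ≠ x ∧ r x (f x) ∧ f (f x) = x where
  mp hf := ⟨fun x hx ↦ (hf.apply_eq_self_iff x).2 hx, fun x hx ↦
    ⟨mt hf.apply_mem_iff.1 hx, mt (hf.apply_eq_self_iff x).1 hx, hf.adj x hx, hf.involutive x⟩⟩
  mpr h := by
    refine ⟨fun x ↦ ?_, fun x ↦ ⟨fun hfx ↦ ?_, h.1 x⟩, fun x hx ↦ (h.2 x hx).2.2.1⟩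
    · by_cases hx : x ∈ A
      · rw [h.1 x hx, h.1 x hx]
      · exact (h.2 x hx).2.2.2
    · by_contra hx
      exact (h.2 x hx).2.1 hfx

theorem IsDimerCover.conj (hf : IsDimerCover r A f) (e : V ≃ W)
    (he : ∀ x y, r x y → s (e x) (e y)) : IsDimerCover s (e.symm ⁻¹' A) (e.conj f) where
  involutive x := by simp [Equiv.conj_apply, hf.involutive (e.symm x)]
  apply_eq_self_iff x := by
    rw [Equiv.conj_apply, ← Equiv.eq_symm_apply, hf.apply_eq_self_iff, Set.mem_preimage]
  adj x hx := by simpa [Equiv.conj_apply] using he _ _ (hf.adj (e.symm x) hx)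

theorem numDimerCovers_image (e : r ≃r s) (A : Set V) :
    numDimerCovers s (e '' A) = numDimerCovers r A := by
  refine (Nat.card_congr (e.toEquiv.conj.subtypeEquiv fun f ↦ ⟨fun hf ↦ ?_, fun hf ↦ ?_⟩)).symm
  · have := hf.conj e.toEquiv fun x y ↦ e.map_rel_iff.2
    rwa [← Equiv.image_eq_preimage_symm] at this
  · have : IsDimerCover r (e ⁻¹' (e '' A)) (e.toEquiv.conj.symm (e.toEquiv.conj f)) :=
      hf.conj e.symm.toEquiv fun x y ↦ e.symm.map_rel_iff.2
    rwa [Equiv.symm_apply_apply, Set.preimage_image_eq _ e.injective] at this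

/-- `θ` is a reflection of the graph with adjacency relation `r` through a plane bisecting edges,
with the vertices of `H` on one side: every edge from `H` to its complement joins a vertex to its
mirror image. -/
structure IsEdgeReflection (r : V → V → Prop) (H : Set V) (θ : V → V) : Prop where
  involutive : Function.Involutive θ
  map_adj : ∀ x y, r x y → r (θ x) (θ y)
  apply_mem_iff : ∀ x, θ x ∈ H ↔ x ∉ H
  eq_apply_of_adj : ∀ x y, x ∈ H → y ∉ H → r x y → y = θ x

/-- The vertices that the dimer cover `f` matches with their own mirror image under `θ`, that is,
the endpoints of the dimers crossing the reflection plane. -/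
def crossingSites (θ f : V → V) : Set V := {x | f x = θ x}

theorem crossingSites_piecewise (H : Set V) [DecidablePred (· ∈ H)] {θ : V → V}
    (hfg : crossingSites θ f = crossingSites θ g) :
    crossingSites θ (H.piecewise f g) = crossingSites θ f := by
  ext x
  have hcross : f x = θ x ↔ g x = θ x := Set.ext_iff.1 hfg x
  by_cases hx : x ∈ H <;> simp [crossingSites, hx, hcross]

namespace IsEdgeReflection

variable {H : Set V} {θ : V → V}

theorem preimage_eq_compl (hθ : IsEdgeReflection r H θ) : θ ⁻¹' H = Hᶜ :=
  Set.ext hθ.apply_mem_iff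

theorem isDimerCover_conj (hθ : IsEdgeReflection r H θ) (hf : IsDimerCover r A f) :
    IsDimerCover r (θ ⁻¹' A) (θ ∘ f ∘ θ) :=
  hf.conj hθ.involutive.toPerm hθ.map_adj

theorem crossingSites_conj (hθ : IsEdgeReflection r H θ) (hf : IsDimerCover r A f) :
    crossingSites θ (θ ∘ f ∘ θ) = crossingSites θ f := by
  ext x
  change θ (f (θ x)) = θ x ↔ f x = θ x
  rw [hθ.involutive.injective.eq_iff, hf.involutive.eq_iff, eq_comm]

theorem eqOn_conj_iff (hθ : IsEdgeReflection r H θ) {K : Set V} :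
    Set.EqOn (θ ∘ f ∘ θ) (θ ∘ g ∘ θ) K ↔ Set.EqOn f g (θ ⁻¹' K) where
  mp h x hx := by
    simpa [hθ.involutive x, hθ.involutive.injective.eq_iff] using h hx
  mpr h x hx := congrArg θ (h (by rwa [Set.mem_preimage, hθ.involutive]))

theorem mem_crossingSites_of_crossing (hθ : IsEdgeReflection r H θ) (hf : IsDimerCover r A f)
    {x : V} (hx : ¬ (f x ∈ H ↔ x ∈ H)) : x ∈ crossingSites θ f := by
  have hxA : x ∉ A := fun h ↦ hx (by rw [(hf.apply_eq_self_iff x).2 h])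
  by_cases hxH : x ∈ H
  · exact hθ.eq_apply_of_adj x (f x) hxH (by tauto) (hf.adj x hxA)
  · have hadj := hf.adj (f x) (mt hf.apply_mem_iff.1 hxA)
    rw [hf.involutive] at hadj
    exact hθ.involutive.eq_iff.1 (hθ.eq_apply_of_adj (f x) x (by tauto) hxH hadj).symm

open Classical in
theorem involutive_piecewise (hθ : IsEdgeReflection r H θ) (hf : IsDimerCover r A f)
    (hg : IsDimerCover r B g) (hfg : crossingSites θ f = crossingSites θ g) :
    Function.Involutive (H.piecewise f g) := by
  intro x
  have hcross : f x = θ x ↔ g x = θ x := Set.ext_iff.1 hfg x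
  by_cases hx : x ∈ H
  · rw [H.piecewise_eq_of_mem f g hx]
    by_cases hfx : f x ∈ H
    · rw [H.piecewise_eq_of_mem f g hfx, hf.involutive]
    · have hfθ : f x = θ x := hθ.mem_crossingSites_of_crossing hf (by tauto)
      rw [H.piecewise_eq_of_notMem f g hfx, hfθ, ← hcross.1 hfθ, hg.involutive]
  · rw [H.piecewise_eq_of_notMem f g hx]
    by_cases hgx : g x ∈ H
    · have hgθ : g x = θ x := hθ.mem_crossingSites_of_crossing hg (by tauto)
      rw [H.piecewise_eq_of_mem f g hgx, hgθ, ← hcross.2 hgθ, hf.involutive]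
    · rw [H.piecewise_eq_of_notMem f g hgx, hg.involutive]

open Classical in
theorem isDimerCover_piecewise (hθ : IsEdgeReflection r H θ) (hf : IsDimerCover r A f)
    (hg : IsDimerCover r B g) (hfg : crossingSites θ f = crossingSites θ g) :
    IsDimerCover r (H.ite A B) (H.piecewise f g) where
  involutive := hθ.involutive_piecewise hf hg hfg
  apply_eq_self_iff x := by
    by_cases hx : x ∈ H <;> simp [Set.ite, hx, hf.apply_eq_self_iff, hg.apply_eq_self_iff]
  adj x hx := by
    by_cases hxH : x ∈ H
    · simpa [hxH] using hf.adj x (by simpa [Set.ite, hxH] using hx)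
    · simpa [hxH] using hg.adj x (by simpa [Set.ite, hxH] using hx)

theorem ite_ite_preimage_preimage (hθ : IsEdgeReflection r H θ) :
    H.ite (H.ite A (θ ⁻¹' B)) (θ ⁻¹' H.ite A (θ ⁻¹' B)) = H.ite A (θ ⁻¹' A) := by
  ext x
  by_cases hx : x ∈ H <;> simp [Set.ite, hx, hθ.apply_mem_iff]

theorem ite_preimage_ite_preimage (hθ : IsEdgeReflection r H θ) :
    H.ite (θ ⁻¹' H.ite A (θ ⁻¹' B)) (H.ite A (θ ⁻¹' B)) = H.ite B (θ ⁻¹' B) := by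
  ext x
  by_cases hx : x ∈ H <;> simp [Set.ite, hx, hθ.apply_mem_iff, hθ.involutive x]

open Classical in
theorem isDimerCover_exchange_fst (hθ : IsEdgeReflection r H θ)
    (hf : IsDimerCover r (H.ite A (θ ⁻¹' B)) f) (hg : IsDimerCover r (H.ite A (θ ⁻¹' B)) g)
    (hfg : crossingSites θ f = crossingSites θ g) :
    IsDimerCover r (H.ite A (θ ⁻¹' A)) (H.piecewise f (θ ∘ g ∘ θ)) :=
  hθ.ite_ite_preimage_preimage ▸ hθ.isDimerCover_piecewise hf (hθ.isDimerCover_conj hg)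
    (hfg.trans (hθ.crossingSites_conj hg).symm)

open Classical in
theorem isDimerCover_exchange_snd (hθ : IsEdgeReflection r H θ)
    (hf : IsDimerCover r (H.ite A (θ ⁻¹' B)) f) (hg : IsDimerCover r (H.ite A (θ ⁻¹' B)) g)
    (hfg : crossingSites θ f = crossingSites θ g) :
    IsDimerCover r (H.ite B (θ ⁻¹' B)) (H.piecewise (θ ∘ f ∘ θ) g) :=
  hθ.ite_preimage_ite_preimage ▸ hθ.isDimerCover_piecewise (hθ.isDimerCover_conj hf) hg
    ((hθ.crossingSites_conj hf).trans hfg)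

open Classical in
theorem eq_and_eq_of_exchange_eq (hθ : IsEdgeReflection r H θ) {f' g' : V → V}
    (hfst : H.piecewise f (θ ∘ g ∘ θ) = H.piecewise f' (θ ∘ g' ∘ θ))
    (hsnd : H.piecewise (θ ∘ f ∘ θ) g = H.piecewise (θ ∘ f' ∘ θ) g') : f = f' ∧ g = g' := by
  rw [piecewise_eq_piecewise_iff, hθ.eqOn_conj_iff, Set.preimage_compl, hθ.preimage_eq_compl,
    compl_compl] at hfst
  rw [piecewise_eq_piecewise_iff, hθ.eqOn_conj_iff, hθ.preimage_eq_compl] at hsnd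
  constructor <;> rw [← Set.eqOn_univ, ← Set.union_compl_self H]
  · exact hfst.1.union hsnd.1
  · exact hfst.2.union hsnd.2

theorem sq_card_crossingSites_fiber_le [Finite V] (hθ : IsEdgeReflection r H θ) (A B S : Set V) :
    Nat.card {f : {f // IsDimerCover r (H.ite A (θ ⁻¹' B)) f} // crossingSites θ f.1 = S} ^ 2 ≤
      Nat.card {f : {f // IsDimerCover r (H.ite A (θ ⁻¹' A)) f} // crossingSites θ f.1 = S} *
        Nat.card {f : {f // IsDimerCover r (H.ite B (θ ⁻¹' B)) f} // crossingSites θ f.1 = S} := by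
  classical
  rw [sq, ← Nat.card_prod, ← Nat.card_prod]
  have hconj (f : {f : {f // IsDimerCover r (H.ite A (θ ⁻¹' B)) f} // crossingSites θ f.1 = S}) :
      crossingSites θ (θ ∘ f.1.1 ∘ θ) = S :=
    (hθ.crossingSites_conj f.1.2).trans f.2
  refine Nat.card_le_card_of_injective (fun p ↦
    (⟨⟨H.piecewise p.1.1.1 (θ ∘ p.2.1.1 ∘ θ),
        hθ.isDimerCover_exchange_fst p.1.1.2 p.2.1.2 (p.1.2.trans p.2.2.symm)⟩,
        (crossingSites_piecewise H (p.1.2.trans (hconj p.2).symm)).trans p.1.2⟩,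
      ⟨⟨H.piecewise (θ ∘ p.1.1.1 ∘ θ) p.2.1.1,
        hθ.isDimerCover_exchange_snd p.1.1.2 p.2.1.2 (p.1.2.trans p.2.2.symm)⟩,
        (crossingSites_piecewise H ((hconj p.1).trans p.2.2.symm)).trans (hconj p.1)⟩)) ?_
  intro p q hpq
  simp only [Prod.mk.injEq, Subtype.mk.injEq] at hpq
  obtain ⟨hfst, hsnd⟩ := hθ.eq_and_eq_of_exchange_eq hpq.1 hpq.2
  exact Prod.ext (Subtype.ext (Subtype.ext hfst)) (Subtype.ext (Subtype.ext hsnd))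

theorem sq_numDimerCovers_ite_le [Finite V] (hθ : IsEdgeReflection r H θ) (A B : Set V) :
    numDimerCovers r (H.ite A (θ ⁻¹' B)) ^ 2 ≤
      numDimerCovers r (H.ite A (θ ⁻¹' A)) * numDimerCovers r (H.ite B (θ ⁻¹' B)) :=
  sq_card_le_card_mul_card_of_fiberwise (fun f ↦ crossingSites θ f.1)
    (fun f ↦ crossingSites θ f.1) (fun f ↦ crossingSites θ f.1)
    (hθ.sq_card_crossingSites_fiber_le A B)

theorem ite_singleton_preimage_singleton (hθ : IsEdgeReflection r H θ) {a b : V} (ha : a ∈ H)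
    (hb : b ∈ H) : H.ite {a} (θ ⁻¹' {b}) = {a, θ b} := by
  have hθb : θ b ∉ H := by simpa [hθ.apply_mem_iff] using hb
  ext x
  simp only [Set.ite, Set.mem_union, Set.mem_inter_iff, Set.mem_sdiff, Set.mem_singleton_iff,
    Set.mem_preimage, Set.mem_insert_iff, hθ.involutive.eq_iff]
  grind

theorem sq_numDimerCovers_pair_le [Finite V] (hθ : IsEdgeReflection r H θ) {a b : V} (ha : a ∈ H)
    (hb : b ∈ H) :
    numDimerCovers r {a, θ b} ^ 2 ≤ numDimerCovers r {a, θ a} * numDimerCovers r {b, θ b} := by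
  simpa only [hθ.ite_singleton_preimage_singleton, ha, hb]
    using hθ.sq_numDimerCovers_ite_le {a} {b}

end IsEdgeReflection

end DimerCover

section Torus

variable {d L : ℕ}

theorem dimerCount_pair (x y : TorusPt d L) :
    dimerCount d L {x, y} = numDimerCovers (@torusAdj d L) {x, y} := by
  rw [← Finset.coe_pair]
  exact Nat.card_congr (Equiv.subtypeEquivRight fun _ ↦ isDimerCover_iff.symm)

/-- Translation by `t` as an automorphism of the torus graph. -/
def torusTranslation (t : TorusPt d L) : @torusAdj d L ≃r @torusAdj d L where
  toEquiv := Equiv.addRight t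
  map_rel_iff' {x y} := by
    have hupdate (j : Fin d) (u : ZMod L) :
        Function.update (x + t) j (u + t j) = Function.update x j u + t := by
      rw [Function.update_add, Function.update_eq_self]
    simp only [torusAdj, Equiv.coe_addRight, Pi.add_apply, add_right_comm (x _) (t _) 1,
      add_sub_right_comm (x _) (t _) 1, hupdate, add_left_inj]

theorem dimerCount_pair_add (x y t : TorusPt d L) :
    dimerCount d L {x + t, y + t} = dimerCount d L {x, y} := by
  have himage : torusTranslation t '' {x, y} = {x + t, y + t} := Set.image_pair ..
  rw [dimerCount_pair, dimerCount_pair, ← himage, numDimerCovers_image]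

/-- The reflection of the torus through the hyperplane `x_i = c - 1/2`. -/
def torusReflection (i : Fin d) (c : ZMod L) (x : TorusPt d L) : TorusPt d L :=
  Function.update x i (2 * c - 1 - x i)

/-- One of the two slabs into which `torusReflection i c` cuts the torus: the points with
`x_i ∈ {c, …, c + L / 2 - 1}`, between the fixed hyperplanes `x_i = c - 1/2` and
`x_i = c + L/2 - 1/2`. -/
def torusHalf (i : Fin d) (c : ZMod L) : Set (TorusPt d L) :=
  {x | (x i - c).val < L / 2}

theorem torusReflection_apply_self (i : Fin d) (c : ZMod L) (x : TorusPt d L) :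
    torusReflection i c x i = 2 * c - 1 - x i :=
  Function.update_self ..

theorem torusReflection_involutive (i : Fin d) (c : ZMod L) :
    Function.Involutive (torusReflection i c) := by
  intro x
  simp [torusReflection]

theorem torusAdj_torusReflection (i : Fin d) (c : ZMod L) {x y : TorusPt d L}
    (hxy : torusAdj x y) : torusAdj (torusReflection i c x) (torusReflection i c y) := by
  obtain ⟨j, hy⟩ := hxy
  refine ⟨j, ?_⟩
  by_cases hj : j = i
  · subst hj
    refine hy.symm.imp ?_ ?_ <;> rintro rfl <;>
      simp only [torusReflection, Function.update_self, Function.update_idem] <;> congr 1 <;> ring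
  · refine hy.imp ?_ ?_ <;> rintro rfl <;>
      simp [torusReflection, hj, Ne.symm hj, Function.update_comm hj]

theorem val_neg_one_sub_add_val [NeZero L] (u : ZMod L) : (-1 - u).val + u.val + 1 = L := by
  obtain ⟨n, rfl⟩ := Nat.exists_eq_succ_of_ne_zero (NeZero.ne L)
  have hu : u.val ≤ (-1 : ZMod n.succ).val := by
    rw [ZMod.val_neg_one]
    exact Nat.lt_succ_iff.1 u.val_lt
  rw [ZMod.val_sub hu, Nat.sub_add_cancel hu, ZMod.val_neg_one]

theorem eq_neg_one_sub_of_crossing [NeZero L] (hL : Even L) {u w : ZMod L} (hu : u.val < L / 2)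
    (hw : ¬ w.val < L / 2) (h : w = u + 1 ∨ w = u - 1) : w = -1 - u := by
  have hone : (1 : ZMod L).val ≤ 1 := ZMod.val_one_eq_one_mod L ▸ Nat.mod_le 1 L
  rcases h with rfl | rfl
  · apply ZMod.val_injective
    have hadd := ZMod.val_add_le u 1
    have hsum := val_neg_one_sub_add_val u
    have := Nat.div_two_mul_two_of_even hL
    omega
  · suffices u = 0 by rw [this]; ring
    by_contra hu0
    have hpos := ZMod.val_pos.2 hu0
    rw [ZMod.val_sub (by omega)] at hw
    omega

theorem isEdgeReflection_torusReflection [NeZero L] (hL : Even L) (i : Fin d) (c : ZMod L) :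
    IsEdgeReflection torusAdj (torusHalf i c) (torusReflection i c) where
  involutive := torusReflection_involutive i c
  map_adj _ _ := torusAdj_torusReflection i c
  apply_mem_iff x := by
    have hcoord : 2 * c - 1 - x i - c = -1 - (x i - c) := by ring
    have hsum := val_neg_one_sub_add_val (x i - c)
    have := Nat.div_two_mul_two_of_even hL
    simp only [torusHalf, Set.mem_ofPred_eq, torusReflection_apply_self, hcoord]
    omega
  eq_apply_of_adj x y hx hy hxy := by
    obtain ⟨j, hy'⟩ := hxy
    simp only [torusHalf, Set.mem_ofPred_eq] at hx hy
    obtain rfl : i = j := by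
      by_contra hij
      rcases hy' with rfl | rfl <;> simp [hij, hx] at hy
    have hcoord : y i - c = -1 - (x i - c) := by
      refine eq_neg_one_sub_of_crossing hL hx hy (hy'.imp ?_ ?_) <;> rintro rfl <;>
        rw [Function.update_self] <;> ring
    have hyi : y i = 2 * c - 1 - x i := by linear_combination hcoord
    rw [torusReflection, ← hyi]
    rcases hy' with rfl | rfl <;> simp

theorem sq_dimerCount_le_of_mem_torusHalf [NeZero L] (hL : Even L) (i : Fin d) (c : ZMod L)
    {x y : TorusPt d L} (hx : x ∉ torusHalf i c) (hy : y ∈ torusHalf i c) :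
    dimerCount d L {x, y} ^ 2 ≤
      dimerCount d L {torusReflection i c y, y} * dimerCount d L {x, torusReflection i c x} := by
  have hθ := isEdgeReflection_torusReflection hL i c
  have hmain := hθ.sq_numDimerCovers_pair_le hy ((hθ.apply_mem_iff x).2 hx)
  rw [hθ.involutive] at hmain
  rw [dimerCount_pair, dimerCount_pair, dimerCount_pair]
  rwa [Set.pair_comm x y, Set.pair_comm _ y, Set.pair_comm x]

theorem torusReflection_torusOrigin (i : Fin d) {c : ZMod L} {n : ℕ}
    (hn : (n : ZMod L) = 2 * c - 1) : torusReflection i c (torusOrigin d L) = axisPt d L i n := by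
  ext j
  by_cases hj : j = i <;> simp [torusReflection, torusOrigin, axisPt, hj, hn]

theorem axisPt_add_torusReflection (i : Fin d) {c : ZMod L} {n : ℕ} (z : TorusPt d L)
    (hn : (n : ZMod L) + (2 * c - 1) = 2 * z i) : axisPt d L i n + torusReflection i c z = z := by
  ext j
  by_cases hj : j = i
  · subst hj
    simp only [Pi.add_apply, axisPt, if_true, torusReflection_apply_self]
    linear_combination hn
  · simp [torusReflection, axisPt, hj]

theorem dimerCount_torusReflection_pair (i : Fin d) {c : ZMod L} {n : ℕ} (z : TorusPt d L)
    (hn : (n : ZMod L) + (2 * c - 1) = 2 * z i) :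
    dimerCount d L {torusReflection i c z, z} =
      dimerCount d L {torusOrigin d L, axisPt d L i n} := by
  have horigin : torusOrigin d L + torusReflection i c z = torusReflection i c z := zero_add _
  rw [← dimerCount_pair_add (torusOrigin d L) _ (torusReflection i c z), horigin,
    axisPt_add_torusReflection i z hn]

theorem mem_torusHalf_natCast [NeZero L] {i : Fin d} {c : ℕ} {z : TorusPt d L}
    (hc : c ≤ (z i).val) (hz : (z i).val < c + L / 2) : z ∈ torusHalf i c := by
  have hval : (c : ZMod L).val = c := ZMod.val_natCast_of_lt (hc.trans_lt (z i).val_lt)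
  change (z i - c).val < L / 2
  rw [ZMod.val_sub (by rwa [hval]), hval]
  omega

theorem torusOrigin_notMem_torusHalf_natCast [NeZero L] (i : Fin d) {c : ℕ} (hc : 0 < c)
    (hcL : 2 * c ≤ L) : torusOrigin d L ∉ torusHalf i c := by
  have hval : (c : ZMod L).val = c := ZMod.val_natCast_of_lt (by omega)
  have hc0 : (c : ZMod L) ≠ 0 := ZMod.val_pos.1 (by rwa [hval])
  change ¬ (0 - (c : ZMod L)).val < L / 2
  rw [zero_sub, ZMod.neg_val, if_neg hc0, hval]
  omega

end Torus

theorem dimer_count_even_point_bound_general {d L : ℕ} [NeZero L] (hL : Even L) (z : TorusPt d L)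
    (i : Fin d) (r : ℕ) (hodd : Odd ((z i).val + r)) (hr : r < (z i).val)
    (hrL : (z i).val + r < L) :
    dimerCount d L {torusOrigin d L, z} ^ 2 ≤
      dimerCount d L {torusOrigin d L, axisPt d L i ((z i).val - r)} *
        dimerCount d L {torusOrigin d L, axisPt d L i ((z i).val + r)} := by
  obtain ⟨c, hc⟩ := even_iff_exists_two_mul.1 hodd.add_one
  have hhalf := Nat.div_two_mul_two_of_even hL
  have hplane : (((z i).val + r : ℕ) : ZMod L) = 2 * c - 1 := by
    rw [eq_sub_iff_add_eq]; exact_mod_cast congrArg (Nat.cast (R := ZMod L)) hc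
  have hdist : (((z i).val - r : ℕ) : ZMod L) + (2 * c - 1) = 2 * z i := by
    rw [← hplane, ← Nat.cast_add, show (z i).val - r + ((z i).val + r) = 2 * (z i).val by omega]
    simp
  have ho : torusOrigin d L ∉ torusHalf i c :=
    torusOrigin_notMem_torusHalf_natCast i (by omega) (by omega)
  have hz : z ∈ torusHalf i c := mem_torusHalf_natCast (by omega) (by have := (z i).val_lt; omega)
  rw [← dimerCount_torusReflection_pair i z hdist, ← torusReflection_torusOrigin i hplane]
  exact sq_dimerCount_le_of_mem_torusHalf hL i c ho hz

/-- **Site-monotonicity for the dimer model at even points.**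
If `z_i` is even and nonzero then
`2|Ω^{dim}({o,z})| ≤ |Ω^{dim}({o,(z_i-1)e_i})| + |Ω^{dim}({o,(z_i+1)e_i})|`. -/
theorem dimer_count_even_point_bound
    (d L : ℕ) [NeZero L] (hd : 2 ≤ d) (hL : Even L)
    (z : TorusPt d L) (i : Fin d) (heven : Even (z i).val) (hne : (z i).val ≠ 0) :
    2 * dimerCount d L {torusOrigin d L, z} ≤
      dimerCount d L {torusOrigin d L, axisPt d L i ((z i).val - 1)} +
        dimerCount d L {torusOrigin d L, axisPt d L i ((z i).val + 1)} := by
  have hlt : (z i).val + 1 < L := by grind [ZMod.val_lt (z i)]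
  exact two_mul_le_add_of_sq_le_mul (Nat.zero_le _) (Nat.zero_le _) <|
    dimer_count_even_point_bound_general hL z i 1 heven.add_one (by grind) hlt
end
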